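/- arXiv:1905.13739 — 4 statements merged into one kernel-verified Lean document; each statement's English description precedes it below -/
import Mathlib

section
/- Let d ≥ 5 and T > 0. The function u*_T(t,x) = (T−t)^{-1} U*(|x|/(T−t)), with U*(ρ) = 2√(2(d−1)(d−4))/(d−4+3ρ²), is a smooth solution of the focusing cubic wave equation ∂_t²u − Δu = u³ on (−∞,T) × ℝ^d. -/
/-- The Laplacian on `ℝ^d` as the sum of second partial derivatives in coordinates. -/
noncomputable def laplacian (d : ℕ) (f : (Fin d → ℝ) → ℝ) (x : Fin d → ℝ) : ℝ :=
  ∑ i, iteratedDeriv 2 (fun s => f (Function.update x i s)) (x i)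

/-!
With `τ = T - t`, self-similar scaling turns the profile into `u = c τ / Q`, where
`Q = a τ² + 3 |x|²`, `a = d - 4`, `c² = 8 (d - 1) (d - 4)`. For a general form
`Q = a τ² + b |x|²`, the quotient rule together with
`a² τ² - b² |x|² = -b Q + a (a + b) τ²` gives
`(∂_t² - Δ) (τ / Q) = (2 b d - 6 a - 8 b) τ / Q² + 8 a (a + b) (τ / Q)³`.
The first term vanishes for `b = 3`, `a = d - 4`, and `c` normalises the second.
-/

open Filter Topology
open scoped ContDiff

section SecondDerivative

variable {𝕜 : Type*} [NontriviallyNormedField 𝕜] {x : 𝕜}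

theorem iteratedDeriv_two_eq_of_hasDerivAt {F : Type*} [NormedAddCommGroup F] [NormedSpace 𝕜 F]
    {f f' : 𝕜 → F} {f'' : F} (hf : ∀ᶠ y in 𝓝 x, HasDerivAt f (f' y) y)
    (hf' : HasDerivAt f' f'' x) : iteratedDeriv 2 f x = f'' := by
  have hderiv : deriv f =ᶠ[𝓝 x] f' := hf.mono fun y hy => hy.deriv
  rw [iteratedDeriv_succ, iteratedDeriv_one, hderiv.deriv_eq, hf'.deriv]

theorem iteratedDeriv_two_div {f f' g g' : 𝕜 → 𝕜} {f'' g'' : 𝕜}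
    (hf : ∀ᶠ y in 𝓝 x, HasDerivAt f (f' y) y) (hf' : HasDerivAt f' f'' x)
    (hg : ∀ᶠ y in 𝓝 x, HasDerivAt g (g' y) y) (hg' : HasDerivAt g' g'' x) (hx : g x ≠ 0) :
    iteratedDeriv 2 (fun y => f y / g y) x =
      f'' / g x - (2 * f' x * g' x + f x * g'') / g x ^ 2 + 2 * f x * g' x ^ 2 / g x ^ 3 := by
  have hne : ∀ᶠ y in 𝓝 x, g y ≠ 0 := hg.self_of_nhds.continuousAt.eventually_ne hx
  have hfirst : ∀ᶠ y in 𝓝 x,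
      HasDerivAt (fun z => f z / g z) ((f' y * g y - f y * g' y) / g y ^ 2) y := by
    filter_upwards [hf, hg, hne] with y hfy hgy hy using hfy.fun_div hgy hy
  have hnum := (hf'.fun_mul hg.self_of_nhds).fun_sub (hf.self_of_nhds.fun_mul hg')
  have hsecond := hnum.fun_div (hg.self_of_nhds.fun_pow 2) (pow_ne_zero 2 hx)
  rw [iteratedDeriv_two_eq_of_hasDerivAt hfirst hsecond]
  field_simp
  push_cast
  ring

end SecondDerivative

theorem sum_sq_update {ι R : Type*} [Fintype ι] [DecidableEq ι] [Ring R]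
    (x : ι → R) (i : ι) (s : R) :
    ∑ j, Function.update x i s j ^ 2 = s ^ 2 + (∑ j, x j ^ 2 - x i ^ 2) := by
  have hsq : (fun j => Function.update x i s j ^ 2) =
      Function.update (fun j => x j ^ 2) i (s ^ 2) :=
    Function.comp_update (· ^ 2) x i s
  rw [hsq, Finset.sum_update_of_mem (Finset.mem_univ i), ← Finset.erase_eq,
    Finset.sum_erase_eq_sub (Finset.mem_univ i)]

/-- The quadratic form `a τ² + b |x|²` on space-time, with `|x|` the Euclidean norm; it is the
denominator of the self-similar solution. The sum of squares is spelled out because `ι → ℝ`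
carries the sup norm. -/
def spacetimeForm {ι : Type*} [Fintype ι] (a b τ : ℝ) (x : ι → ℝ) : ℝ :=
  a * τ ^ 2 + b * ∑ i, x i ^ 2

section SpacetimeForm

variable {ι : Type*} [Fintype ι] {a b τ : ℝ}

theorem spacetimeForm_pos (ha : 0 < a) (hb : 0 ≤ b) (hτ : τ ≠ 0) (x : ι → ℝ) :
    0 < spacetimeForm a b τ x := by
  unfold spacetimeForm
  positivity

theorem contDiffOn_div_spacetimeForm {n : WithTop ℕ∞} (c T : ℝ) :
    ContDiffOn ℝ n
      (fun p : ℝ × (ι → ℝ) => c * (T - p.1) / spacetimeForm a b (T - p.1) p.2)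
      {p | spacetimeForm a b (T - p.1) p.2 ≠ 0} := by
  unfold spacetimeForm
  exact ContDiffOn.div (by fun_prop) (by fun_prop) fun p hp => hp

theorem inv_mul_div_add_mul_sq_eq_div_spacetimeForm (c : ℝ) (x : ι → ℝ) :
    τ⁻¹ * (c / (a + b * (√(∑ i, x i ^ 2) / τ) ^ 2)) = c * τ / spacetimeForm a b τ x := by
  rcases eq_or_ne τ 0 with rfl | hτ
  · simp
  · have hsum : 0 ≤ ∑ i, x i ^ 2 := Finset.sum_nonneg fun i _ => sq_nonneg (x i)
    have hscale : a + b * (√(∑ i, x i ^ 2) / τ) ^ 2 = spacetimeForm a b τ x / τ ^ 2 := by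
      rw [div_pow, Real.sq_sqrt hsum, spacetimeForm]
      field_simp
    rw [hscale]
    field_simp

theorem hasDerivAt_spacetimeForm_sub (T : ℝ) (x : ι → ℝ) (s : ℝ) :
    HasDerivAt (fun r => spacetimeForm a b (T - r) x) (-2 * a * (T - s)) s := by
  have h := ((((hasDerivAt_id' s).const_sub T).fun_pow 2).const_mul a).add_const
    (b * ∑ i, x i ^ 2)
  exact h.congr_deriv (by push_cast; ring)

theorem hasDerivAt_spacetimeForm_update [DecidableEq ι] (x : ι → ℝ) (i : ι) (s : ℝ) :
    HasDerivAt (fun r => spacetimeForm a b τ (Function.update x i r)) (2 * b * s) s := by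
  simp only [spacetimeForm, sum_sq_update]
  have h := (((hasDerivAt_pow 2 s).add_const (∑ j, x j ^ 2 - x i ^ 2)).const_mul b).const_add
    (a * τ ^ 2)
  exact h.congr_deriv (by push_cast; ring)

theorem iteratedDeriv_two_div_spacetimeForm {T t : ℝ} {x : ι → ℝ} (c : ℝ)
    (hQ : spacetimeForm a b (T - t) x ≠ 0) :
    iteratedDeriv 2 (fun s => c * (T - s) / spacetimeForm a b (T - s) x) t =
      c * (T - t) * (-6 * a / spacetimeForm a b (T - t) x ^ 2 +
        8 * a ^ 2 * (T - t) ^ 2 / spacetimeForm a b (T - t) x ^ 3) := by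
  have hnum (s : ℝ) : HasDerivAt (fun r => c * (T - r)) (-c) s := by
    simpa using ((hasDerivAt_id s).const_sub T).const_mul c
  have hslope : HasDerivAt (fun s => -2 * a * (T - s)) (2 * a) t := by
    simpa using ((hasDerivAt_id t).const_sub T).const_mul (-2 * a)
  rw [iteratedDeriv_two_div (.of_forall hnum) (hasDerivAt_const t (-c))
    (.of_forall (hasDerivAt_spacetimeForm_sub T x)) hslope hQ]
  ring

end SpacetimeForm

section WaveOperator

variable {a b : ℝ} {d : ℕ} {x : Fin d → ℝ}

theorem laplacian_div_spacetimeForm {τ : ℝ} (m : ℝ) (hQ : spacetimeForm a b τ x ≠ 0) :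
    laplacian d (fun y => m / spacetimeForm a b τ y) x =
      m * (-2 * b * d / spacetimeForm a b τ x ^ 2 +
        8 * b ^ 2 * (∑ i, x i ^ 2) / spacetimeForm a b τ x ^ 3) := by
  have hpartial (i : Fin d) :
      iteratedDeriv 2 (fun s => m / spacetimeForm a b τ (Function.update x i s)) (x i) =
        m * (-2 * b / spacetimeForm a b τ x ^ 2 +
          8 * b ^ 2 / spacetimeForm a b τ x ^ 3 * x i ^ 2) := by
    have hslope : HasDerivAt (fun s => 2 * b * s) (2 * b) (x i) := by
      simpa using (hasDerivAt_id (x i)).const_mul (2 * b)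
    rw [iteratedDeriv_two_div (.of_forall fun s => hasDerivAt_const s m)
      (hasDerivAt_const (x i) 0)
      (.of_forall (hasDerivAt_spacetimeForm_update x i)) hslope (by simpa using hQ)]
    simp only [Function.update_eq_self]
    ring
  simp only [laplacian, hpartial, ← Finset.mul_sum, Finset.sum_add_distrib, Finset.sum_const,
    Finset.card_univ, Fintype.card_fin, nsmul_eq_mul]
  ring

theorem wave_div_spacetimeForm {T t : ℝ} (c : ℝ) (hQ : spacetimeForm a b (T - t) x ≠ 0) :
    iteratedDeriv 2 (fun s => c * (T - s) / spacetimeForm a b (T - s) x) t -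
        laplacian d (fun y => c * (T - t) / spacetimeForm a b (T - t) y) x =
      c * (T - t) * ((2 * b * d - 6 * a - 8 * b) / spacetimeForm a b (T - t) x ^ 2 +
        8 * a * (a + b) * (T - t) ^ 2 / spacetimeForm a b (T - t) x ^ 3) := by
  rw [iteratedDeriv_two_div_spacetimeForm c hQ, laplacian_div_spacetimeForm _ hQ]
  have hsq : 8 * b ^ 2 * ∑ i, x i ^ 2 =
      8 * b * (spacetimeForm a b (T - t) x - a * (T - t) ^ 2) := by
    unfold spacetimeForm
    ring
  rw [hsq]
  field_simp
  ring

theorem cubic_wave_div_spacetimeForm {c T t : ℝ} (hc : c ^ 2 = 8 * (d - 1) * (d - 4))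
    (hQ : spacetimeForm (d - 4) 3 (T - t) x ≠ 0) :
    iteratedDeriv 2 (fun s => c * (T - s) / spacetimeForm (d - 4) 3 (T - s) x) t -
        laplacian d (fun y => c * (T - t) / spacetimeForm (d - 4) 3 (T - t) y) x =
      (c * (T - t) / spacetimeForm (d - 4) 3 (T - t) x) ^ 3 := by
  have hcoeff : (2 * 3 * d - 6 * (d - 4) - 8 * 3 : ℝ) = 0 := by ring
  have hcube : 8 * ((d : ℝ) - 4) * (d - 4 + 3) = c ^ 2 := by rw [hc]; ring
  rw [wave_div_spacetimeForm c hQ, hcoeff, hcube]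
  ring

end WaveOperator

theorem selfsimilar_blowup_smooth_solution_general (d : ℕ) (hd : 5 ≤ d) (T : ℝ)
    (U : ℝ → ℝ)
    (hU : ∀ ρ, U ρ = 2 * Real.sqrt (2 * ((d : ℝ) - 1) * ((d : ℝ) - 4)) /
      ((d : ℝ) - 4 + 3 * ρ ^ 2))
    (u : ℝ → (Fin d → ℝ) → ℝ)
    (hu : ∀ t x, u t x = (T - t)⁻¹ * U (Real.sqrt (∑ i, (x i) ^ 2) / (T - t))) :
    ContDiffOn ℝ ω (fun p : ℝ × (Fin d → ℝ) => u p.1 p.2) ({T}ᶜ ×ˢ Set.univ) ∧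
    ∀ t, t ≠ T → ∀ x : Fin d → ℝ,
      iteratedDeriv 2 (fun s => u s x) t - laplacian d (u t) x = (u t x) ^ 3 := by
  have hd' : (5 : ℝ) ≤ d := mod_cast hd
  set c := 2 * √(2 * ((d : ℝ) - 1) * ((d : ℝ) - 4)) with hc
  have hc_sq : c ^ 2 = 8 * (d - 1) * (d - 4) := by
    rw [hc, mul_pow, Real.sq_sqrt (mul_nonneg (by linarith) (by linarith))]
    ring
  have hform {t : ℝ} (ht : t ≠ T) (x : Fin d → ℝ) : spacetimeForm (d - 4) 3 (T - t) x ≠ 0 :=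
    (spacetimeForm_pos (by linarith) (by norm_num) (sub_ne_zero.2 ht.symm) x).ne'
  obtain rfl : u = fun t x => c * (T - t) / spacetimeForm (d - 4) 3 (T - t) x := by
    funext t x
    rw [hu, hU, inv_mul_div_add_mul_sq_eq_div_spacetimeForm]
  exact ⟨(contDiffOn_div_spacetimeForm c T).mono fun p hp => hform hp.1 p.2,
    fun t ht x => cubic_wave_div_spacetimeForm hc_sq (hform ht x)⟩

/-- For `d ≥ 5` and `T > 0`, the function `u*_T(t,x) = (T−t)⁻¹ U*(|x|/(T−t))`, with
`U*(ρ) = 2√(2(d−1)(d−4))/(d−4+3ρ²)`, is a smooth solution of the focusing cubic wave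
equation `∂_t²u − Δu = u³` on `(−∞,T) × ℝ^d`. -/
theorem selfsimilar_blowup_smooth_solution (d : ℕ) (hd : 5 ≤ d) (T : ℝ) (hT : 0 < T)
    (U : ℝ → ℝ)
    (hU : ∀ ρ, U ρ = 2 * Real.sqrt (2 * ((d : ℝ) - 1) * ((d : ℝ) - 4)) /
      ((d : ℝ) - 4 + 3 * ρ ^ 2))
    (u : ℝ → (Fin d → ℝ) → ℝ)
    (hu : ∀ t x, u t x = (T - t)⁻¹ * U (Real.sqrt (∑ i, (x i) ^ 2) / (T - t))) :
    ContDiffOn ℝ (⊤ : ℕ∞) (fun p : ℝ × (Fin d → ℝ) => u p.1 p.2) (Set.Iio T ×ˢ Set.univ) ∧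
    ∀ t, t < T → ∀ x : Fin d → ℝ,
      iteratedDeriv 2 (fun s => u s x) t - laplacian d (u t) x = (u t x) ^ 3 := by
  obtain ⟨hsmooth, hwave⟩ := selfsimilar_blowup_smooth_solution_general d hd T U hU u hu
  exact ⟨(hsmooth.of_le le_top).mono (Set.prod_mono_left fun t ht => ne_of_lt ht),
    fun t ht => hwave t ht.ne⟩
end

section
/- Let d ≥ 5. The function f_0(ρ) = (d−4−3ρ²)/(d−4+3ρ²)² solves the mode ODE with parameter λ = 1, i.e., (1−ρ²)f_0''(ρ) + ((d−1)/ρ − 6ρ)f_0'(ρ) − (6 − 24(d−1)(d−4)/(d−4+3ρ²)²)f_0(ρ) = 0 for all ρ > 0. -/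
/-!
Self-similar blowup profiles `u` of the cubic wave equation are the zeros of the profile operator
`E`. Translating the blowup time moves `u` in the direction `Λu = u + ρ u'`, and the scaling
covariance of the equation gives, for every smooth `u`, the identity `L_u (Λu) = ρ (E u)' + 3 E u`,
where `L_u` is the mode operator with `λ = 1` and potential obtained by linearizing at `u`.
So `Λu` is a mode as soon as `E u = 0`. The gauge mode `f₀` is `Λu` for `u = 1 / (d - 4 + 3ρ²)`, a
multiple of `U*`; normalizing away the square root in `U*` puts the factor `8(d - 1)(d - 4)` in
front of the cubic term.
-/

open Filter Topology

section ModeOperators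

variable {𝕜 : Type*} [NontriviallyNormedField 𝕜]

/-- The left-hand side of the ODE `(1 - ρ²) u'' + ((d - 1)/ρ - 4ρ) u' - 2u + c u³ = 0` for
self-similar profiles of the cubic wave equation. The coupling constant `c` allows an arbitrary
normalization of `u`, and the dimension `d` is an arbitrary scalar. -/
noncomputable def profileOperator (d c : 𝕜) (u : 𝕜 → 𝕜) (ρ : 𝕜) : 𝕜 :=
  (1 - ρ ^ 2) * iteratedDeriv 2 u ρ + ((d - 1) / ρ - 4 * ρ) * deriv u ρ - 2 * u ρ + c * u ρ ^ 3

/-- The left-hand side of the mode ODE with parameter `lam` (the `λ` of the paper) and an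
arbitrary potential `V`. Linearizing `profileOperator d c` at `u` gives `V = 3 c u²`. -/
noncomputable def modeOperator (d lam : 𝕜) (V f : 𝕜 → 𝕜) (ρ : 𝕜) : 𝕜 :=
  (1 - ρ ^ 2) * iteratedDeriv 2 f ρ + ((d - 1) / ρ - 2 * (lam + 2) * ρ) * deriv f ρ
    - ((lam + 1) * (lam + 2) - V ρ) * f ρ

/-- The generator `Λu = u + ρ u'` of the variation of the self-similar solution with profile `u`
under translation of the blowup time. -/
noncomputable def timeTranslationMode (u : 𝕜 → 𝕜) (ρ : 𝕜) : 𝕜 :=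
  u ρ + ρ * deriv u ρ

theorem modeOperator_congr {d lam : 𝕜} {V f g : 𝕜 → 𝕜} {ρ : 𝕜} (h : f =ᶠ[𝓝 ρ] g) :
    modeOperator d lam V f ρ = modeOperator d lam V g ρ := by
  simp only [modeOperator, h.iteratedDeriv_eq 2, h.deriv_eq, h.eq_of_nhds]

theorem hasDerivAt_iteratedDeriv_of_contDiffAt {F : Type*} [NormedAddCommGroup F]
    [NormedSpace 𝕜 F] {f : 𝕜 → F} {x : 𝕜} {n : ℕ} (hf : ContDiffAt 𝕜 (n + 1 : ℕ) f x) :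
    HasDerivAt (iteratedDeriv n f) (iteratedDeriv (n + 1) f x) x := by
  have hdiff : DifferentiableAt 𝕜 (iteratedDeriv n f) x := by
    rw [iteratedDeriv_eq_equiv_comp, LinearIsometryEquiv.comp_differentiableAt_iff]
    exact hf.differentiableAt_iteratedFDeriv (by exact_mod_cast n.lt_succ_self)
  simpa only [iteratedDeriv_succ] using hdiff.hasDerivAt

theorem iteratedDeriv_timeTranslationMode {u : 𝕜 → 𝕜} {x : 𝕜} (n : ℕ)
    (hu : ContDiffAt 𝕜 (n + 1 : ℕ) u x) :
    iteratedDeriv n (timeTranslationMode u) x =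
      (n + 1) * iteratedDeriv n u x + x * iteratedDeriv (n + 1) u x := by
  induction n generalizing x with
  | zero => simp [timeTranslationMode]
  | succ n ih =>
    have hu' : ContDiffAt 𝕜 (n + 1 : ℕ) u x := hu.of_le (by exact_mod_cast (n + 1).le_succ)
    have formula_near : iteratedDeriv n (timeTranslationMode u) =ᶠ[𝓝 x]
        fun y ↦ (n + 1) * iteratedDeriv n u y + y * iteratedDeriv (n + 1) u y :=
      (hu'.eventually (by simp)).mono fun _ ↦ ih
    have hderiv := ((hasDerivAt_iteratedDeriv_of_contDiffAt hu').const_mul (n + 1 : 𝕜)).fun_add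
      ((hasDerivAt_id' x).fun_mul (hasDerivAt_iteratedDeriv_of_contDiffAt hu))
    rw [iteratedDeriv_succ, formula_near.deriv_eq, hderiv.deriv]
    push_cast
    ring

theorem hasDerivAt_profileOperator {d c : 𝕜} {u : 𝕜 → 𝕜} {ρ : 𝕜}
    (hρ : ρ ≠ 0) (hu : ContDiffAt 𝕜 3 u ρ) :
    HasDerivAt (profileOperator d c u)
      ((1 - ρ ^ 2) * iteratedDeriv 3 u ρ + ((d - 1) / ρ - 6 * ρ) * iteratedDeriv 2 u ρ
        - ((d - 1) / ρ ^ 2 + 6 - 3 * c * u ρ ^ 2) * deriv u ρ) ρ := by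
  have hu₀ : HasDerivAt u (deriv u ρ) ρ := (hu.differentiableAt (by simp)).hasDerivAt
  have hu₁ : HasDerivAt (deriv u) (iteratedDeriv 2 u ρ) ρ := by
    simpa only [iteratedDeriv_one] using
      hasDerivAt_iteratedDeriv_of_contDiffAt (n := 1) (hu.of_le (by norm_num))
  have hu₂ : HasDerivAt (iteratedDeriv 2 u) (iteratedDeriv 3 u ρ) ρ :=
    hasDerivAt_iteratedDeriv_of_contDiffAt (n := 2) hu
  have hcoeff₂ : HasDerivAt (fun x : 𝕜 ↦ 1 - x ^ 2) (-(2 * ρ)) ρ := by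
    simpa using (hasDerivAt_pow 2 ρ).const_sub 1
  have hcoeff₁ : HasDerivAt (fun x : 𝕜 ↦ (d - 1) / x - 4 * x) (-((d - 1) / ρ ^ 2) - 4) ρ := by
    simpa [div_eq_mul_inv] using
      ((hasDerivAt_inv hρ).const_mul (d - 1)).fun_sub ((hasDerivAt_id' ρ).const_mul 4)
  have h := (((hcoeff₂.fun_mul hu₂).fun_add (hcoeff₁.fun_mul hu₁)).fun_sub
    (hu₀.const_mul 2)).fun_add ((hu₀.fun_pow 3).const_mul c)
  refine h.congr_deriv ?_
  push_cast
  ring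

theorem modeOperator_timeTranslationMode {d c : 𝕜} {u : 𝕜 → 𝕜} {ρ : 𝕜}
    (hρ : ρ ≠ 0) (hu : ContDiffAt 𝕜 3 u ρ) :
    modeOperator d 1 (fun x ↦ 3 * c * u x ^ 2) (timeTranslationMode u) ρ =
      ρ * deriv (profileOperator d c u) ρ + 3 * profileOperator d c u ρ := by
  have hmode₁ : deriv (timeTranslationMode u) ρ = 2 * deriv u ρ + ρ * iteratedDeriv 2 u ρ := by
    have h := iteratedDeriv_timeTranslationMode 1 (hu.of_le (by norm_num))
    rw [iteratedDeriv_one, iteratedDeriv_one] at h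
    rw [h]
    norm_num
  have hmode₂ : iteratedDeriv 2 (timeTranslationMode u) ρ =
      3 * iteratedDeriv 2 u ρ + ρ * iteratedDeriv 3 u ρ := by
    rw [iteratedDeriv_timeTranslationMode 2 hu]
    norm_num
  rw [(hasDerivAt_profileOperator hρ hu).deriv]
  simp only [modeOperator, hmode₁, hmode₂, timeTranslationMode, profileOperator]
  field_simp
  ring

theorem modeOperator_timeTranslationMode_eq_zero {d c : 𝕜} {u : 𝕜 → 𝕜} {ρ : 𝕜}
    (hρ : ρ ≠ 0) (hu : ContDiffAt 𝕜 3 u ρ) (hE : profileOperator d c u =ᶠ[𝓝 ρ] 0) :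
    modeOperator d 1 (fun x ↦ 3 * c * u x ^ 2) (timeTranslationMode u) ρ = 0 := by
  rw [modeOperator_timeTranslationMode hρ hu, hE.deriv_eq, hE.eq_of_nhds]
  simp

end ModeOperators

section RationalProfile

variable {𝕜 : Type*} [NontriviallyNormedField 𝕜] {a x : 𝕜}

/-- The profile `1 / (a + 3x²)`; for `a = d - 4` it is `U*` divided by the constant
`2√(2(d - 1)(d - 4))`. -/
noncomputable def rationalProfile (a x : 𝕜) : 𝕜 := (a + 3 * x ^ 2)⁻¹

theorem eventually_add_three_mul_sq_ne_zero (hx : a + 3 * x ^ 2 ≠ 0) :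
    ∀ᶠ y in 𝓝 x, a + 3 * y ^ 2 ≠ 0 :=
  (by fun_prop : ContinuousAt (fun y : 𝕜 ↦ a + 3 * y ^ 2) x).eventually_ne hx

theorem contDiffAt_rationalProfile {n : WithTop ℕ∞} (hx : a + 3 * x ^ 2 ≠ 0) :
    ContDiffAt 𝕜 n (rationalProfile a) x :=
  (by fun_prop : ContDiffAt 𝕜 n (fun y : 𝕜 ↦ a + 3 * y ^ 2) x).fun_inv hx

theorem hasDerivAt_rationalProfile (hx : a + 3 * x ^ 2 ≠ 0) :
    HasDerivAt (rationalProfile a) (-6 * x * rationalProfile a x ^ 2) x := by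
  have h := (((hasDerivAt_pow 2 x).const_mul 3).const_add a).fun_inv hx
  refine h.congr_deriv ?_
  rw [rationalProfile, inv_pow]
  push_cast
  ring

theorem iteratedDeriv_two_rationalProfile (hx : a + 3 * x ^ 2 ≠ 0) :
    iteratedDeriv 2 (rationalProfile a) x =
      -6 * rationalProfile a x ^ 2 + 72 * x ^ 2 * rationalProfile a x ^ 3 := by
  have deriv_near : deriv (rationalProfile a) =ᶠ[𝓝 x] fun y ↦ -6 * y * rationalProfile a y ^ 2 :=
    (eventually_add_three_mul_sq_ne_zero hx).mono fun _ hy ↦ (hasDerivAt_rationalProfile hy).deriv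
  have hderiv := ((hasDerivAt_id' x).const_mul (-6)).fun_mul
    ((hasDerivAt_rationalProfile hx).fun_pow 2)
  rw [iteratedDeriv_succ, iteratedDeriv_one, deriv_near.deriv_eq, hderiv.deriv]
  push_cast
  ring

theorem profileOperator_rationalProfile {d ρ : 𝕜} (hρ : ρ ≠ 0) (hD : d - 4 + 3 * ρ ^ 2 ≠ 0) :
    profileOperator d (8 * (d - 1) * (d - 4)) (rationalProfile (d - 4)) ρ = 0 := by
  rw [profileOperator, iteratedDeriv_two_rationalProfile hD, (hasDerivAt_rationalProfile hD).deriv]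
  simp only [rationalProfile]
  field_simp
  ring

theorem timeTranslationMode_rationalProfile (hx : a + 3 * x ^ 2 ≠ 0) :
    timeTranslationMode (rationalProfile a) x = (a - 3 * x ^ 2) / (a + 3 * x ^ 2) ^ 2 := by
  rw [timeTranslationMode, (hasDerivAt_rationalProfile hx).deriv]
  simp only [rationalProfile]
  field_simp
  ring

end RationalProfile

theorem gauge_mode_solves_mode_ODE_general {𝕜 : Type*} [NontriviallyNormedField 𝕜] {d ρ : 𝕜}
    {f₀ : 𝕜 → 𝕜} (hf₀ : ∀ x, f₀ x = (d - 4 - 3 * x ^ 2) / (d - 4 + 3 * x ^ 2) ^ 2)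
    (hρ : ρ ≠ 0) (hD : d - 4 + 3 * ρ ^ 2 ≠ 0) :
    (1 - ρ ^ 2) * iteratedDeriv 2 f₀ ρ + ((d - 1) / ρ - 6 * ρ) * deriv f₀ ρ
      - (6 - 24 * (d - 1) * (d - 4) / (d - 4 + 3 * ρ ^ 2) ^ 2) * f₀ ρ = 0 := by
  have hD_near := eventually_add_three_mul_sq_ne_zero hD
  have f₀_eq_mode : f₀ =ᶠ[𝓝 ρ] timeTranslationMode (rationalProfile (d - 4)) :=
    hD_near.mono fun x hx ↦ (hf₀ x).trans (timeTranslationMode_rationalProfile hx).symm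
  have profile_eq : profileOperator d (8 * (d - 1) * (d - 4)) (rationalProfile (d - 4)) =ᶠ[𝓝 ρ] 0 :=
    (hD_near.and (eventually_ne_nhds hρ)).mono fun _ hx ↦ profileOperator_rationalProfile hx.2 hx.1
  have mode_eq :=
    modeOperator_timeTranslationMode_eq_zero hρ (contDiffAt_rationalProfile hD) profile_eq
  have potential_eq : 24 * (d - 1) * (d - 4) / (d - 4 + 3 * ρ ^ 2) ^ 2 =
      3 * (8 * (d - 1) * (d - 4)) * rationalProfile (d - 4) ρ ^ 2 := by
    rw [rationalProfile, inv_pow]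
    ring
  rw [potential_eq, ← mode_eq, ← modeOperator_congr f₀_eq_mode, modeOperator]
  ring

/-- For `d ≥ 5`, the gauge mode `f₀(ρ) = (d−4−3ρ²)/(d−4+3ρ²)²` solves the mode ODE
with parameter `λ = 1` for all `ρ > 0`. -/
theorem gauge_mode_solves_mode_ODE (d : ℕ) (hd : 5 ≤ d)
    (f₀ : ℝ → ℝ)
    (hf₀ : ∀ ρ, f₀ ρ = ((d : ℝ) - 4 - 3 * ρ ^ 2) / ((d : ℝ) - 4 + 3 * ρ ^ 2) ^ 2) :
    ∀ ρ : ℝ, 0 < ρ →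
      (1 - ρ ^ 2) * iteratedDeriv 2 f₀ ρ
        + (((d : ℝ) - 1) / ρ - 6 * ρ) * deriv f₀ ρ
        - (6 - 24 * ((d : ℝ) - 1) * ((d : ℝ) - 4) /
            ((d : ℝ) - 4 + 3 * ρ ^ 2) ^ 2) * f₀ ρ = 0 := by
  have hd' : (5 : ℝ) ≤ d := by exact_mod_cast hd
  exact fun ρ hρ ↦ gauge_mode_solves_mode_ODE_general hf₀ hρ.ne' (by nlinarith [sq_nonneg ρ])
end

section
/- Let d = 7 and let λ ∈ ℂ with Re λ ≥ 0. If f is a nonzero complex-valued function that is smooth on [0,1] and solves the mode ODE (1−ρ²)f''(ρ) + (6/ρ − 2(λ+2)ρ)f'(ρ) − ((λ+1)(λ+2) − 432/(3+3ρ²)²)f(ρ) = 0 on (0,1), then either λ = 1 and f is a constant multiple of f_0(ρ) = (1−ρ²)/(1+ρ²)², or λ = 3 and f is a constant multiple of f_1(ρ) = (1+ρ²)^{-2}. -/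
/-!
In the variable `s = 1 - ρ²` the light cone `ρ = 1` becomes the regular singular point `s = 0`, and
`F = (2 - s)² f` solves an equation with polynomial coefficients. A solution smooth at `s = 0` is
determined by its Taylor series there: a difference of two with the same series is flat, and a flat
solution vanishes by Grönwall's inequality in `log s`. The Taylor coefficients `aₙ` satisfy a
three-term recurrence whose characteristic roots `1` and `1 / 2` come from the singular points
`s = 1` (the origin `ρ = 0`) and `s = 2`. For `λ = 1` and `λ = 3` it truncates to `F = c s` and
`F = c`. Otherwise put `gₙ = (2 n + λ - 3) aₙ` and divide `∑ gₙ sⁿ` by `2 - s`, which replaces `gₙ`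
by its dyadic averages `bₙ`. The cone `‖bₙ‖ ≤ R ‖gₙ₊₁‖` is propagated by the recurrence, so the
coefficients follow the dominant root: `aₙ₊₁ / aₙ` agrees with `(n + 5 / 2) / (n + 1)` up to a
summable error. Hence `F` grows like `(1 - s) ^ (-5 / 2) = ρ⁻⁵` at the origin, contradicting its
boundedness.
-/

namespace ModeODE

open Asymptotics Filter PowerSeries Set Topology
open scoped ContDiff

section PowerSeriesSum

/-- Absolute convergence of a formal power series on the open unit disc of `ℂ`. -/
def ConvergesOnDisc (A : ℂ⟦X⟧) : Prop :=
  ∀ z : ℂ, ‖z‖ < 1 → Summable fun n => ‖coeff n A * z ^ n‖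

/-- The sum of a formal power series; only meaningful on a disc of convergence. -/
noncomputable def psum (A : ℂ⟦X⟧) (z : ℂ) : ℂ :=
  ∑' n, coeff n A * z ^ n

variable {A B : ℂ⟦X⟧} {z : ℂ}

lemma ConvergesOnDisc.hasSum (hA : ConvergesOnDisc A) (hz : ‖z‖ < 1) :
    HasSum (fun n => coeff n A * z ^ n) (psum A z) :=
  (hA z hz).of_norm.hasSum

lemma psum_eq_of_hasSum {v : ℂ} (h : HasSum (fun n => coeff n A * z ^ n) v) : psum A z = v :=
  h.tsum_eq

lemma ConvergesOnDisc.of_summable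
    (h : ∀ z : ℂ, ‖z‖ < 1 → Summable fun n => coeff n A * z ^ n) : ConvergesOnDisc A :=
  fun z hz => (h z hz).norm

lemma hasSum_X_mul {v : ℂ} (h : HasSum (fun n => coeff n A * z ^ n) v) :
    HasSum (fun n => coeff n (X * A) * z ^ n) (z * v) := by
  rw [hasSum_nat_add_iff' 1 |>.symm]
  simpa [coeff_succ_X_mul, pow_succ', mul_left_comm] using h.mul_left z

lemma hasSum_polynomial_mul (p : Polynomial ℂ) {v : ℂ}
    (h : HasSum (fun n => coeff n A * z ^ n) v) :
    HasSum (fun n => coeff n ((p : ℂ⟦X⟧) * A) * z ^ n) (p.eval z * v) := by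
  induction p using Polynomial.induction_on' with
  | add p q hp hq => simpa [add_mul] using hp.add hq
  | monomial n c =>
    have hpow : ∀ n : ℕ, HasSum (fun k => coeff k (X ^ n * A) * z ^ k) (z ^ n * v) := by
      intro n
      induction n with
      | zero => simpa using h
      | succ n ih => simpa [pow_succ', mul_assoc] using hasSum_X_mul ih
    have := (hpow n).mul_left c
    simpa [← Polynomial.C_mul_X_pow_eq_monomial, mul_assoc] using this

lemma ConvergesOnDisc.exists_majorant (hA : ConvergesOnDisc A) (hz : ‖z‖ < 1) :
    ∃ (r : ℝ) (u : ℕ → ℝ), z ∈ Metric.ball (0 : ℂ) r ∧ Summable u ∧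
      ∀ n, ∀ w ∈ Metric.ball (0 : ℂ) r, ‖coeff n A * w ^ n‖ ≤ u n := by
  obtain ⟨r, hzr, hr⟩ := exists_between hz
  have hr0 : ‖(r : ℂ)‖ = r := by
    rw [Complex.norm_real, Real.norm_of_nonneg ((norm_nonneg z).trans hzr.le)]
  refine ⟨r, _, mem_ball_zero_iff.mpr hzr, hA r (hr0.trans_lt hr), fun n w hw => ?_⟩
  rw [norm_mul, norm_mul, norm_pow, norm_pow, hr0]
  gcongr
  exact (mem_ball_zero_iff.mp hw).le

lemma ConvergesOnDisc.hasSum_derivative (hA : ConvergesOnDisc A) (hz : ‖z‖ < 1) :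
    HasSum (fun n => coeff n (d⁄dX ℂ A) * z ^ n) (deriv (psum A) z) := by
  obtain ⟨r, u, hzr, hu, hle⟩ := hA.exists_majorant hz
  have hsum := Complex.hasSum_deriv_of_summable_norm hu
    (fun n => by fun_prop) Metric.isOpen_ball hle hzr
  change HasSum _ (deriv (psum A) z) at hsum
  rw [hasSum_nat_add_iff' 1 |>.symm] at hsum
  simpa [coeff_derivative, mul_assoc] using hsum

lemma ConvergesOnDisc.derivative (hA : ConvergesOnDisc A) :
    ConvergesOnDisc (d⁄dX ℂ A) :=
  .of_summable fun _ hz => (hA.hasSum_derivative hz).summable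

lemma ConvergesOnDisc.hasDerivAt (hA : ConvergesOnDisc A) (hz : ‖z‖ < 1) :
    HasDerivAt (psum A) (psum (d⁄dX ℂ A) z) z := by
  obtain ⟨r, u, hzr, hu, hle⟩ := hA.exists_majorant hz
  have hdiff : DifferentiableOn ℂ (psum A) (Metric.ball 0 r) :=
    Complex.differentiableOn_tsum_of_summable_norm hu (fun n => by fun_prop)
      Metric.isOpen_ball hle
  rw [psum_eq_of_hasSum (hA.hasSum_derivative hz)]
  exact (hdiff.differentiableAt (Metric.isOpen_ball.mem_nhds hzr)).hasDerivAt

end PowerSeriesSum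

section Taylor

/-- Smoothness on `[0, 1)`, one-sided at `0`. -/
abbrev Smooth (F : ℝ → ℂ) : Prop :=
  ContDiffOn ℝ ∞ F (Ico 0 1)

/-- The Taylor series at `0` of a function on `[0, 1)`, with one-sided derivatives. -/
noncomputable def taylor (F : ℝ → ℂ) : ℂ⟦X⟧ :=
  PowerSeries.mk fun n => iteratedDerivWithin n F (Ico 0 1) 0 / n.factorial

/-- Differentiation of functions on `[0, 1)`, one-sided at `0`. -/
noncomputable abbrev D (F : ℝ → ℂ) : ℝ → ℂ :=
  derivWithin F (Ico 0 1)

variable {F G : ℝ → ℂ}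

lemma coeff_taylor (n : ℕ) :
    coeff n (taylor F) = iteratedDerivWithin n F (Ico 0 1) 0 / n.factorial :=
  coeff_mk _ _

lemma coeff_zero_taylor : coeff 0 (taylor F) = F 0 := by
  simp [coeff_taylor]

lemma smooth_D (hF : Smooth F) : Smooth (D F) :=
  hF.derivWithin (uniqueDiffOn_Ico 0 1) (by simp)

lemma Smooth.hasDerivWithinAt (hF : Smooth F) {s : ℝ} (hs : s ∈ Ico 0 1) :
    HasDerivWithinAt F (D F s) (Ico 0 1) s :=
  (hF.differentiableOn (by simp) s hs).hasDerivWithinAt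

lemma Smooth.hasDerivAt (hF : Smooth F) {s : ℝ} (hs : s ∈ Ioo 0 1) :
    HasDerivAt F (D F s) s :=
  (hF.hasDerivWithinAt (Ioo_subset_Ico_self hs)).hasDerivAt (Ico_mem_nhds hs.1 hs.2)

lemma taylor_D : taylor (D F) = d⁄dX ℂ (taylor F) := by
  ext n
  rw [coeff_derivative, coeff_taylor, coeff_taylor, iteratedDerivWithin_succ',
    Nat.factorial_succ]
  push_cast
  have : (n : ℂ) + 1 ≠ 0 := n.cast_add_one_ne_zero
  field_simp

lemma D_congr (h : EqOn F G (Ico 0 1)) : EqOn (D F) (D G) (Ico 0 1) :=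
  fun _ hs => derivWithin_congr h (h hs)

lemma taylor_congr (h : EqOn F G (Ico 0 1)) : taylor F = taylor G := by
  ext n
  rw [coeff_taylor, coeff_taylor, iteratedDerivWithin_congr h (by simp)]

lemma taylor_add (hF : Smooth F) (hG : Smooth G) :
    taylor (fun s => F s + G s) = taylor F + taylor G := by
  ext n
  rw [map_add, coeff_taylor, coeff_taylor, coeff_taylor, ← add_div,
    iteratedDerivWithin_fun_add (by simp) (uniqueDiffOn_Ico 0 1)
      ((hF 0 (by simp)).of_le (mod_cast le_top)) ((hG 0 (by simp)).of_le (mod_cast le_top))]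

lemma taylor_sub (hF : Smooth F) (hG : Smooth G) :
    taylor (fun s => F s - G s) = taylor F - taylor G := by
  ext n
  rw [map_sub, coeff_taylor, coeff_taylor, coeff_taylor, ← sub_div]
  congr 1
  exact iteratedDerivWithin_sub (by simp) (uniqueDiffOn_Ico 0 1)
    ((hF 0 (by simp)).of_le (mod_cast le_top)) ((hG 0 (by simp)).of_le (mod_cast le_top))

lemma taylor_const_mul (c : ℂ) (hF : Smooth F) :
    taylor (fun s => c * F s) = C c * taylor F := by
  ext n
  rw [coeff_C_mul, coeff_taylor, coeff_taylor, ← mul_div_assoc,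
    iteratedDerivWithin_const_mul (by simp) (uniqueDiffOn_Ico 0 1) c
      ((hF 0 (by simp)).of_le (mod_cast le_top))]

lemma Smooth.id_mul (hF : Smooth F) : Smooth fun s => (s : ℂ) * F s :=
  Complex.ofRealCLM.contDiff.contDiffOn.mul hF

lemma taylor_id_mul (hF : Smooth F) : taylor (fun s => (s : ℂ) * F s) = X * taylor F := by
  ext n
  induction n generalizing F with
  | zero => simp [coeff_zero_taylor]
  | succ n ih =>
    have hprod : EqOn (D fun s => (s : ℂ) * F s) (fun s => F s + (s : ℂ) * D F s) (Ico 0 1) := by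
      intro s hs
      have hid : HasDerivWithinAt (fun s : ℝ => (s : ℂ)) 1 (Ico 0 1) s := by
        simpa using (hasDerivAt_id s).ofReal_comp.hasDerivWithinAt
      simpa using (hid.fun_mul (hF.hasDerivWithinAt hs)).derivWithin (uniqueDiffOn_Ico 0 1 s hs)
    have hderiv : coeff n (d⁄dX ℂ (taylor fun s => (s : ℂ) * F s)) =
        coeff n (d⁄dX ℂ (X * taylor F)) := by
      rw [← taylor_D, taylor_congr hprod, taylor_add hF (smooth_D hF).id_mul, map_add,
        ih (smooth_D hF), taylor_D]
      simp [Derivation.leibniz, add_comm]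
    rw [coeff_derivative, coeff_derivative] at hderiv
    exact mul_right_cancel₀ n.cast_add_one_ne_zero hderiv

lemma Smooth.polynomial_mul (p : Polynomial ℂ) (hF : Smooth F) :
    Smooth fun s => p.eval (s : ℂ) * F s := by
  have : ContDiff ℝ ∞ fun s : ℝ => p.eval (s : ℂ) := by
    simp only [Polynomial.eval_eq_sum_range]
    exact ContDiff.sum fun i _ => contDiff_const.mul (Complex.ofRealCLM.contDiff.pow i)
  exact this.contDiffOn.mul hF

lemma taylor_polynomial_mul (p : Polynomial ℂ) (hF : Smooth F) :
    taylor (fun s => p.eval (s : ℂ) * F s) = p * taylor F := by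
  induction p using Polynomial.induction_on' with
  | add p q hp hq =>
    simp only [Polynomial.eval_add, add_mul, Polynomial.coe_add]
    rw [taylor_add (hF.polynomial_mul p) (hF.polynomial_mul q), hp, hq]
  | monomial n c =>
    have hpow : Smooth (fun s => (s : ℂ) ^ n * F s) ∧
        taylor (fun s => (s : ℂ) ^ n * F s) = X ^ n * taylor F := by
      induction n with
      | zero => simpa using hF
      | succ n ih =>
        simp only [pow_succ', mul_assoc]
        exact ⟨ih.1.id_mul, by rw [taylor_id_mul ih.1, ih.2]⟩
    simp only [Polynomial.eval_monomial, mul_assoc, Polynomial.coe_monomial]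
    rw [taylor_const_mul c hpow.1, hpow.2, ← mul_assoc, monomial_eq_C_mul_X_pow]

end Taylor

section RealSum

variable {A : ℂ⟦X⟧} {s : ℝ}

lemma norm_ofReal_lt_one (hs : s ∈ Ico (0 : ℝ) 1) : ‖(s : ℂ)‖ < 1 := by
  rw [Complex.norm_real, Real.norm_of_nonneg hs.1]
  exact hs.2

lemma ConvergesOnDisc.hasDerivWithinAt_ofReal (hA : ConvergesOnDisc A) (hs : s ∈ Ico (0 : ℝ) 1) :
    HasDerivWithinAt (fun t : ℝ => psum A t) (psum (d⁄dX ℂ A) s) (Ico 0 1) s :=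
  (hA.hasDerivAt (norm_ofReal_lt_one hs)).comp_ofReal.hasDerivWithinAt

lemma ConvergesOnDisc.D_psum (hA : ConvergesOnDisc A) :
    EqOn (D fun t => psum A t) (fun t => psum (d⁄dX ℂ A) t) (Ico 0 1) :=
  fun s hs => (hA.hasDerivWithinAt_ofReal hs).derivWithin (uniqueDiffOn_Ico 0 1 s hs)

lemma ConvergesOnDisc.smooth_psum (hA : ConvergesOnDisc A) : Smooth fun t => psum A t := by
  refine contDiffOn_of_differentiableOn_deriv fun n _ => ?_
  induction n generalizing A with
  | zero =>
    rw [iteratedDerivWithin_zero]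
    exact fun s hs => (hA.hasDerivWithinAt_ofReal hs).differentiableWithinAt
  | succ n ih =>
    rw [iteratedDerivWithin_succ']
    exact (ih hA.derivative (mod_cast le_top)).congr (iteratedDerivWithin_congr hA.D_psum)

lemma psum_zero : psum A 0 = coeff 0 A := by
  simpa [psum] using tsum_eq_single (f := fun n => coeff n A * 0 ^ n) 0 fun n hn => by simp [hn]

lemma ConvergesOnDisc.taylor_psum (hA : ConvergesOnDisc A) : taylor (fun t => psum A t) = A := by
  ext n
  induction n generalizing A with
  | zero => simp [coeff_zero_taylor, psum_zero]
  | succ n ih =>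
    have h := ih hA.derivative
    rw [← taylor_congr hA.D_psum, taylor_D, coeff_derivative, coeff_derivative] at h
    exact mul_right_cancel₀ n.cast_add_one_ne_zero h

end RealSum

section LinearODE

/-- The second order differential operator `P ∂² + Q ∂ + R` acting on functions on `[0, 1)`. -/
noncomputable def odeOp (P Q R : Polynomial ℂ) (F : ℝ → ℂ) (s : ℝ) : ℂ :=
  P.eval (s : ℂ) * D (D F) s + Q.eval (s : ℂ) * D F s + R.eval (s : ℂ) * F s

/-- The differential operator `P ∂² + Q ∂ + R` acting on formal power series. -/
noncomputable def formalOdeOp (P Q R : Polynomial ℂ) (A : ℂ⟦X⟧) : ℂ⟦X⟧ :=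
  P * d⁄dX ℂ (d⁄dX ℂ A) + Q * d⁄dX ℂ A + R * A

variable {P Q R : Polynomial ℂ} {F G : ℝ → ℂ}

lemma smooth_odeOp (hF : Smooth F) : Smooth (odeOp P Q R F) :=
  (((smooth_D (smooth_D hF)).polynomial_mul P).add ((smooth_D hF).polynomial_mul Q)).add
    (hF.polynomial_mul R)

lemma taylor_odeOp (hF : Smooth F) :
    taylor (odeOp P Q R F) = formalOdeOp P Q R (taylor F) := by
  have hF' := smooth_D hF
  have hF'' := smooth_D hF'
  unfold odeOp
  rw [taylor_add ((hF''.polynomial_mul P).add (hF'.polynomial_mul Q)) (hF.polynomial_mul R),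
    taylor_add (hF''.polynomial_mul P) (hF'.polynomial_mul Q), taylor_polynomial_mul P hF'',
    taylor_polynomial_mul Q hF', taylor_polynomial_mul R hF, taylor_D, taylor_D, formalOdeOp]

lemma odeOp_sub (hF : Smooth F) (hG : Smooth G) {s : ℝ} (hs : s ∈ Ico (0 : ℝ) 1) :
    odeOp P Q R (fun s => F s - G s) s = odeOp P Q R F s - odeOp P Q R G s := by
  have D_sub : ∀ {F G : ℝ → ℂ}, Smooth F → Smooth G →
      EqOn (D fun s => F s - G s) (fun s => D F s - D G s) (Ico 0 1) := fun hF hG s hs =>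
    ((hF.hasDerivWithinAt hs).fun_sub (hG.hasDerivWithinAt hs)).derivWithin
      (uniqueDiffOn_Ico 0 1 s hs)
  simp only [odeOp]
  rw [D_congr (D_sub hF hG) hs, D_sub hF hG hs, D_sub (smooth_D hF) (smooth_D hG) hs]
  ring

lemma ConvergesOnDisc.odeOp_psum {A : ℂ⟦X⟧} (hA : ConvergesOnDisc A) :
    EqOn (odeOp P Q R fun t => psum A t) (fun t => psum (formalOdeOp P Q R A) t) (Ico 0 1) := by
  intro s hs
  have hz := norm_ofReal_lt_one hs
  have h2 := hasSum_polynomial_mul P (hA.derivative.derivative.hasSum hz)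
  have h1 := hasSum_polynomial_mul Q (hA.derivative.hasSum hz)
  have h0 := hasSum_polynomial_mul R (hA.hasSum hz)
  have hsum := (h2.add h1).add h0
  simp only [← add_mul, ← map_add] at hsum
  rw [odeOp, D_congr hA.D_psum hs, hA.derivative.D_psum hs, hA.D_psum hs]
  exact (psum_eq_of_hasSum hsum).symm

end LinearODE

section RegularSingularPoint

variable {E : Type*} [NormedAddCommGroup E] [NormedSpace ℝ E] {Y Y' : ℝ → E} {K : ℕ} {t r : ℝ}

-- Grönwall's inequality in the variable `τ = log s`.
lemma norm_mul_pow_le_of_mul_norm_deriv_le (ht : 0 < t) (htr : t ≤ r)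
    (hY : ∀ s ∈ Icc t r, HasDerivAt Y (Y' s) s)
    (hK : ∀ s ∈ Icc t r, s * ‖Y' s‖ ≤ K * ‖Y s‖) :
    ‖Y r‖ * t ^ K ≤ ‖Y t‖ * r ^ K := by
  have hr : 0 < r := ht.trans_le htr
  have hmem : ∀ τ ∈ Icc 0 (Real.log (r / t)), t * Real.exp τ ∈ Icc t r := fun τ hτ => by
    have hexp := Real.exp_le_exp.mpr hτ.2
    rw [Real.exp_log (by positivity), le_div_iff₀ ht, mul_comm] at hexp
    exact ⟨le_mul_of_one_le_right ht.le (Real.one_le_exp hτ.1), hexp⟩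
  have hderiv : ∀ τ ∈ Icc 0 (Real.log (r / t)), HasDerivAt (fun τ => Y (t * Real.exp τ))
      ((t * Real.exp τ) • Y' (t * Real.exp τ)) τ := fun τ hτ =>
    (hY _ (hmem τ hτ)).scomp τ ((Real.hasDerivAt_exp τ).const_mul t)
  have hlog : 0 ≤ Real.log (r / t) := Real.log_nonneg ((one_le_div ht).mpr htr)
  have hgronwall := norm_le_gronwallBound_of_norm_deriv_right_le (K := K) (ε := 0)
    (fun τ hτ => (hderiv τ hτ).continuousAt.continuousWithinAt)
    (fun τ hτ => (hderiv τ (Ico_subset_Icc_self hτ)).hasDerivWithinAt) le_rfl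
    (fun τ hτ => by
      have hτ' := hmem τ (Ico_subset_Icc_self hτ)
      rw [norm_smul, Real.norm_of_nonneg (ht.le.trans hτ'.1), add_zero]
      exact hK _ hτ')
    _ (right_mem_Icc.mpr hlog)
  rw [gronwallBound_ε0, sub_zero, Real.exp_nat_mul, Real.exp_log (by positivity), Real.exp_zero,
    mul_one, mul_div_cancel₀ _ ht.ne', div_pow, ← mul_div_assoc] at hgronwall
  exact (le_div_iff₀ (by positivity)).mp hgronwall

lemma eq_zero_of_mul_norm_deriv_le_of_isLittleO (hr : 0 < r)
    (hY : ∀ s ∈ Ioc 0 r, HasDerivAt Y (Y' s) s)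
    (hK : ∀ s ∈ Ioc 0 r, s * ‖Y' s‖ ≤ K * ‖Y s‖)
    (hflat : Y =o[𝓝[>] 0] fun s => s ^ K) : Y r = 0 := by
  have hle : ∀ᶠ t in 𝓝[>] 0, ‖Y r‖ ≤ ‖‖Y t‖ / t ^ K‖ * r ^ K := by
    filter_upwards [Ioc_mem_nhdsGT hr] with t ht
    have hsub : Icc t r ⊆ Ioc 0 r := fun s hs => ⟨ht.1.trans_le hs.1, hs.2⟩
    have := norm_mul_pow_le_of_mul_norm_deriv_le ht.1 ht.2
      (fun s hs => hY s (hsub hs)) (fun s hs => hK s (hsub hs))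
    have htK : 0 < t ^ K := pow_pos ht.1 K
    rw [Real.norm_of_nonneg (by positivity), div_mul_eq_mul_div]
    exact (le_div_iff₀ htK).mpr this
  have hlim := (hflat.norm_left.tendsto_div_nhds_zero.norm).mul_const (r ^ K)
  rw [norm_zero, zero_mul] at hlim
  exact norm_le_zero_iff.mp (ge_of_tendsto hlim hle)

end RegularSingularPoint

section Uniqueness

variable {P Q R : Polynomial ℂ} {F : ℝ → ℂ}

lemma isLittleO_pow_of_taylor_eq_zero (hF : Smooth F) (h : taylor F = 0) (n : ℕ) :
    F =o[𝓝[>] 0] fun s => s ^ n := by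
  have hzero : ∀ s, taylorWithinEval F n (Ico 0 1) 0 s = 0 := fun s => by
    rw [taylor_within_apply]
    refine Finset.sum_eq_zero fun k _ => ?_
    have hk := congrArg (coeff k) h
    rw [coeff_taylor, map_zero, div_eq_zero_iff] at hk
    rw [hk.resolve_right (mod_cast k.factorial_ne_zero), smul_zero]
  have := taylor_isLittleO (n := n) (convex_Ico (0 : ℝ) 1) (left_mem_Ico.mpr one_pos)
    (hF.of_le (mod_cast le_top))
  simp only [hzero, sub_zero] at this
  exact this.mono (nhdsWithin_le_of_mem (Ico_mem_nhdsGT one_pos))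

lemma exists_nat_bound_of_continuousOn {g : ℝ → ℂ} {r : ℝ} (hg : ContinuousOn g (Icc 0 r)) :
    ∃ K : ℕ, ∀ s ∈ Icc 0 r, ‖g s‖ ≤ K := by
  obtain ⟨c, hc⟩ := isCompact_Icc.exists_bound_of_continuousOn hg
  obtain ⟨K, hK⟩ := exists_nat_ge c
  exact ⟨K, fun s hs => (hc s hs).trans hK⟩

lemma exists_mul_norm_deriv_le (hP : ∀ s ∈ Ico (0 : ℝ) 1, P.eval (s : ℂ) ≠ 0)
    (hode : EqOn (odeOp (Polynomial.X * P) Q R F) 0 (Ico 0 1)) {r : ℝ} (hr : r < 1) :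
    ∃ K : ℕ, ∀ s ∈ Ioc 0 r, s * ‖(D F s, D (D F) s)‖ ≤ K * ‖(F s, D F s)‖ := by
  have hsub : Icc 0 r ⊆ Ico 0 1 := fun s hs => ⟨hs.1, hs.2.trans_lt hr⟩
  have hcont (p : Polynomial ℂ) : Continuous fun s : ℝ => p.eval (s : ℂ) :=
    p.continuous.comp Complex.continuous_ofReal
  have hquot (p : Polynomial ℂ) := exists_nat_bound_of_continuousOn
    ((hcont p).continuousOn.div (hcont P).continuousOn fun s hs => hP s (hsub hs))
  obtain ⟨K, hK⟩ := hquot Q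
  obtain ⟨M, hM⟩ := hquot R
  refine ⟨1 + (K + M), fun s hs => ?_⟩
  have hs' : s ∈ Icc 0 r := Ioc_subset_Icc_self hs
  have hF0 : ‖F s‖ ≤ ‖(F s, D F s)‖ := norm_fst_le (F s, D F s)
  have hF1 : ‖D F s‖ ≤ ‖(F s, D F s)‖ := norm_snd_le (F s, D F s)
  have hsolve : (s : ℂ) * D (D F) s = -(Q.eval (s : ℂ) / P.eval (s : ℂ) * D F s
      + R.eval (s : ℂ) / P.eval (s : ℂ) * F s) := by
    have hode_s := hode (hsub hs')
    simp only [odeOp, Polynomial.eval_mul, Polynomial.eval_X, Pi.zero_apply] at hode_s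
    have := hP s (hsub hs')
    field_simp
    linear_combination hode_s
  have hF2 : s * ‖D (D F) s‖ ≤ (K + M) * ‖(F s, D F s)‖ := by
    calc s * ‖D (D F) s‖ = ‖(s : ℂ) * D (D F) s‖ := by
          rw [norm_mul, Complex.norm_real, Real.norm_of_nonneg hs.1.le]
      _ ≤ K * ‖(F s, D F s)‖ + M * ‖(F s, D F s)‖ := by
          rw [hsolve, norm_neg]
          refine norm_add_le_of_le ?_ ?_ <;> rw [norm_mul]
          exacts [mul_le_mul (hK s hs') hF1 (norm_nonneg _) K.cast_nonneg,
            mul_le_mul (hM s hs') hF0 (norm_nonneg _) M.cast_nonneg]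
      _ = (K + M) * ‖(F s, D F s)‖ := by ring
  have hsF1 : s * ‖D F s‖ ≤ ‖(F s, D F s)‖ :=
    (mul_le_of_le_one_left (norm_nonneg _) (hs.2.trans hr.le)).trans hF1
  push_cast
  rw [Prod.norm_def (D F s, D (D F) s), mul_max_of_nonneg _ _ hs.1.le, one_add_mul]
  exact max_le (hsF1.trans (le_add_of_nonneg_right (by positivity)))
    (hF2.trans (le_add_of_nonneg_left (norm_nonneg _)))

lemma eqOn_zero_of_odeOp_eq_zero (hP : ∀ s ∈ Ico (0 : ℝ) 1, P.eval (s : ℂ) ≠ 0) (hF : Smooth F)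
    (hode : EqOn (odeOp (Polynomial.X * P) Q R F) 0 (Ico 0 1)) (hT : taylor F = 0) :
    EqOn F 0 (Ioo 0 1) := by
  intro r hr
  obtain ⟨K, hK⟩ := exists_mul_norm_deriv_le hP hode hr.2
  have hderiv : ∀ s ∈ Ioc 0 r,
      HasDerivAt (fun s => (F s, D F s)) (D F s, D (D F) s) s := fun s hs =>
    have hs' : s ∈ Ioo (0 : ℝ) 1 := ⟨hs.1, hs.2.trans_lt hr.2⟩
    (hF.hasDerivAt hs').prodMk ((smooth_D hF).hasDerivAt hs')
  have hflat := (isLittleO_pow_of_taylor_eq_zero hF hT K).prod_left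
    (isLittleO_pow_of_taylor_eq_zero (smooth_D hF) (by rw [taylor_D, hT, map_zero]) K)
  exact congrArg Prod.fst (eq_zero_of_mul_norm_deriv_le_of_isLittleO hr.1 hderiv hK hflat)

lemma formalOdeOp_taylor_eq_zero (hF : Smooth F) (hode : EqOn (odeOp P Q R F) 0 (Ico 0 1)) :
    formalOdeOp P Q R (taylor F) = 0 := by
  rw [← taylor_odeOp hF, taylor_congr hode]
  have hzero := taylor_const_mul 0 hF
  simp only [zero_mul, map_zero] at hzero
  exact hzero

lemma eqOn_psum_taylor (hP : ∀ s ∈ Ico (0 : ℝ) 1, P.eval (s : ℂ) ≠ 0) (hF : Smooth F)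
    (hode : EqOn (odeOp (Polynomial.X * P) Q R F) 0 (Ico 0 1))
    (hconv : ConvergesOnDisc (taylor F)) :
    EqOn F (fun s => psum (taylor F) s) (Ioo 0 1) := by
  have hsum : EqOn (odeOp (Polynomial.X * P) Q R fun s => psum (taylor F) s) 0 (Ico 0 1) := by
    intro s hs
    rw [hconv.odeOp_psum hs, formalOdeOp_taylor_eq_zero hF hode]
    simp [psum]
  have hsmooth := hconv.smooth_psum
  have hdiff : EqOn (odeOp (Polynomial.X * P) Q R fun s => F s - psum (taylor F) s) 0
      (Ico 0 1) := fun s hs => by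
    rw [odeOp_sub hF hsmooth hs, hode hs, hsum hs, Pi.zero_apply, sub_self]
  have hT : taylor (fun s => F s - psum (taylor F) s) = 0 := by
    rw [taylor_sub hF hsmooth, hconv.taylor_psum, sub_self]
  exact fun s hs => sub_eq_zero.mp (eqOn_zero_of_odeOp_eq_zero hP (hF.sub hsmooth) hdiff hT hs)

end Uniqueness

section Growth

lemma summable_of_le_mul_add {u v : ℕ → ℝ} {θ : ℝ} (hθ : θ < 1) (hu : ∀ n, 0 ≤ u n)
    (hv : Summable v) (hv0 : ∀ n, 0 ≤ v n) (h : ∀ n, u (n + 1) ≤ θ * u n + v n) : Summable u := by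
  refine summable_of_sum_range_le (c := (u 0 + ∑' n, v n) / (1 - θ)) hu fun N => ?_
  rw [le_div_iff₀ (sub_pos.mpr hθ)]
  have hmono : ∑ n ∈ Finset.range N, u n ≤ ∑ n ∈ Finset.range (N + 1), u n := by
    rw [Finset.sum_range_succ]
    exact le_add_of_nonneg_right (hu N)
  have hstep : ∑ n ∈ Finset.range N, u (n + 1) ≤
      θ * ∑ n ∈ Finset.range N, u n + ∑' n, v n := by
    calc ∑ n ∈ Finset.range N, u (n + 1)
        ≤ ∑ n ∈ Finset.range N, (θ * u n + v n) := Finset.sum_le_sum fun n _ => h n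
      _ ≤ θ * ∑ n ∈ Finset.range N, u n + ∑' n, v n := by
          rw [Finset.sum_add_distrib, ← Finset.mul_sum]
          exact add_le_add_right (hv.sum_le_tsum _ fun n _ => hv0 n) _
  rw [Finset.sum_range_succ'] at hmono
  linarith

lemma exists_tendsto_div_prod {a q : ℕ → ℂ} (ha : ∀ n, a n ≠ 0) (hq : ∀ n, q n ≠ 0)
    (h : Summable fun n => ‖a (n + 1) / (a n * q n) - 1‖) :
    ∃ l ≠ 0, Tendsto (fun n => a n / ∏ k ∈ Finset.range n, q k) atTop (𝓝 l) := by
  have hne : ∀ n, 1 + (a (n + 1) / (a n * q n) - 1) ≠ 0 := fun n => by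
    rw [add_sub_cancel]
    exact div_ne_zero (ha _) (mul_ne_zero (ha n) (hq n))
  have hprod : ∀ n, a 0 * ∏ k ∈ Finset.range n, (1 + (a (k + 1) / (a k * q k) - 1)) =
      a n / ∏ k ∈ Finset.range n, q k := fun n => by
    induction n with
    | zero => simp
    | succ n ih =>
      rw [Finset.prod_range_succ, ← mul_assoc, ih, Finset.prod_range_succ]
      have := ha n
      have := hq n
      have := Finset.prod_ne_zero_iff.mpr fun k (_ : k ∈ Finset.range n) => hq k
      field_simp
      ring
  have hlim := ((multipliable_one_add_of_summable h).hasProd.tendsto_prod_nat).const_mul (a 0)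
  simp only [hprod] at hlim
  exact ⟨_, mul_ne_zero (ha 0) (tprod_one_add_ne_zero_of_summable hne h), hlim⟩

lemma exists_eventually_le_re_mul {a : ℕ → ℂ} {q : ℕ → ℝ} (ha : ∀ n, a n ≠ 0) (hq : ∀ n, 1 ≤ q n)
    (h : Summable fun n => ‖a (n + 1) / (a n * q n) - 1‖) :
    ∃ w : ℂ, ∀ᶠ n in atTop, 1 ≤ (w * a n).re := by
  obtain ⟨l, hl, hlim⟩ := exists_tendsto_div_prod ha
    (fun n => Complex.ofReal_ne_zero.mpr (one_pos.trans_le (hq n)).ne') h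
  have hre := (Complex.continuous_re.tendsto _).comp (hlim.const_mul (2 / l))
  rw [div_mul_cancel₀ _ hl] at hre
  refine ⟨2 / l, (hre.eventually_const_lt (by norm_num : (1 : ℝ) < _)).mono fun n hn => ?_⟩
  have hQ : 1 ≤ ∏ k ∈ Finset.range n, q k := Finset.one_le_prod fun k _ => hq k
  rw [Function.comp_apply, ← Complex.ofReal_prod, ← mul_div_assoc, Complex.div_ofReal_re,
    lt_div_iff₀ (one_pos.trans_le hQ)] at hn
  linarith

lemma exists_le_re_psum {A : ℂ⟦X⟧} (hA : ConvergesOnDisc A)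
    (h : ∀ᶠ n in atTop, 1 ≤ (coeff n A).re) :
    ∃ M, ∀ s ∈ Ico (0 : ℝ) 1, (1 - s)⁻¹ - M ≤ (psum A s).re := by
  obtain ⟨N, hN⟩ := eventually_atTop.mp h
  refine ⟨∑ n ∈ Finset.range N, |(coeff n A).re - 1|, fun s hs => ?_⟩
  have hre := (Complex.hasSum_re (hA.hasSum (norm_ofReal_lt_one hs))).sub
    (hasSum_geometric_of_lt_one hs.1 hs.2)
  simp only [← Complex.ofReal_pow, Complex.re_mul_ofReal, ← sub_one_mul] at hre
  have htail := sum_le_hasSum (Finset.range N) (fun n hn => mul_nonneg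
    (sub_nonneg.mpr (hN n (not_lt.mp (mt Finset.mem_range.mpr hn)))) (pow_nonneg hs.1 n)) hre
  have hhead : -∑ n ∈ Finset.range N, |(coeff n A).re - 1| ≤
      ∑ n ∈ Finset.range N, ((coeff n A).re - 1) * s ^ n := by
    rw [← Finset.sum_neg_distrib]
    refine Finset.sum_le_sum fun n _ => (neg_le_neg ?_).trans (neg_abs_le _)
    rw [abs_mul, abs_of_nonneg (pow_nonneg hs.1 n)]
    exact mul_le_of_le_one_right (abs_nonneg _) (pow_le_one₀ hs.1 hs.2.le)
  linarith

lemma not_bounded_psum {A : ℂ⟦X⟧} (hA : ConvergesOnDisc A) {w : ℂ}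
    (h : ∀ᶠ n in atTop, 1 ≤ (w * coeff n A).re) {M : ℝ} :
    ¬ ∀ s ∈ Ioo (0 : ℝ) 1, ‖psum A s‖ ≤ M := by
  intro hM
  have hwA : ∀ {z : ℂ}, ‖z‖ < 1 → HasSum (fun n => coeff n (C w * A) * z ^ n) (w * psum A z) :=
    fun hz => by simpa [mul_assoc] using (hA.hasSum hz).mul_left w
  obtain ⟨M', hM'⟩ := exists_le_re_psum (A := C w * A)
    (.of_summable fun z hz => (hwA hz).summable) (by simpa using h)
  have hle : ∀ s ∈ Ioo (0 : ℝ) 1, (1 - s)⁻¹ ≤ M' + ‖w‖ * M := fun s hs => by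
    have hlow := hM' s (Ioo_subset_Ico_self hs)
    rw [psum_eq_of_hasSum (hwA (norm_ofReal_lt_one (Ioo_subset_Ico_self hs)))] at hlow
    have hup := (Complex.re_le_norm _).trans (norm_mul_le_of_le le_rfl (hM s hs) : ‖w * _‖ ≤ _)
    linarith
  have hM1 : 0 < M' + ‖w‖ * M := (by norm_num : (0 : ℝ) < _).trans_le (hle 2⁻¹ (by norm_num))
  have hs : 1 - (M' + ‖w‖ * M + 2)⁻¹ ∈ Ioo (0 : ℝ) 1 :=
    ⟨sub_pos.mpr (inv_lt_one_of_one_lt₀ (by linarith)), sub_lt_self _ (by positivity)⟩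
  have := hle _ hs
  rw [sub_sub_cancel, inv_inv] at this
  linarith

end Growth

section Recurrence

/-- The coefficient `8 - 12 s + 4 s²` of `s F''` in the mode equation written in the
variable `s = 1 - ρ²`; its roots `1` and `2` correspond to `ρ = 0` and `ρ² = -1`. -/
noncomputable def modeP : Polynomial ℂ :=
  .C 8 - .C 12 * .X + .C 4 * .X ^ 2

/-- The coefficient of `F'` in the mode equation written in the variable `s = 1 - ρ²`. -/
noncomputable def modeQ (L : ℂ) : Polynomial ℂ :=
  .C (8 * (L - 1)) - .C (12 * L) * .X + .C (2 * (2 * L - 3)) * .X ^ 2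

/-- The coefficient of `F` in the mode equation written in the variable `s = 1 - ρ²`. -/
noncomputable def modeR (L : ℂ) : Polynomial ℂ :=
  .C ((L - 3) * (L - 2)) * .X - .C ((L - 3) * (2 * L + 4))

/-- The three-term recurrence expressing that `∑ aₙ sⁿ` is a formal solution at the light cone
`s = 0` of the mode equation in the variable `s = 1 - ρ²`. -/
structure ModeRecurrence (L : ℂ) (a : ℕ → ℂ) : Prop where
  zero : 8 * (L - 1) * a 1 = (L - 3) * (2 * L + 4) * a 0
  add_two (n : ℕ) : 8 * ((n : ℂ) + 2) * (n + L) * a (n + 2) =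
    (12 * ((n : ℂ) + 1) * n + 12 * L * (n + 1) + (L - 3) * (2 * L + 4)) * a (n + 1)
      - (2 * n + L - 2) * (2 * n + L - 3) * a n

variable {L : ℂ} {a : ℕ → ℂ}

lemma formalOdeOp_mode_eq (A : ℂ⟦X⟧) :
    formalOdeOp (.X * modeP) (modeQ L) (modeR L) A =
      C 8 * (X * d⁄dX ℂ (d⁄dX ℂ A)) - C 12 * (X * (X * d⁄dX ℂ (d⁄dX ℂ A))) +
        C 4 * (X * (X * (X * d⁄dX ℂ (d⁄dX ℂ A)))) + C (8 * (L - 1)) * d⁄dX ℂ A -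
        C (12 * L) * (X * d⁄dX ℂ A) + C (2 * (2 * L - 3)) * (X * (X * d⁄dX ℂ A)) -
        C ((L - 3) * (2 * L + 4)) * A + C ((L - 3) * (L - 2)) * (X * A) := by
  simp only [formalOdeOp, modeP, modeQ, modeR, Polynomial.coe_add, Polynomial.coe_sub,
    Polynomial.coe_mul, Polynomial.coe_pow, Polynomial.coe_X, Polynomial.coe_C]
  ring

lemma modeRecurrence_coeff {A : ℂ⟦X⟧}
    (h : formalOdeOp (.X * modeP) (modeQ L) (modeR L) A = 0) :
    ModeRecurrence L fun n => coeff n A := by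
  rw [formalOdeOp_mode_eq] at h
  have hcoeff := fun n => congrArg (coeff n) h
  simp only [map_add, map_sub, coeff_C_mul, map_zero (coeff _)] at hcoeff
  refine ⟨?_, fun n => ?_⟩
  · have h0 := hcoeff 0
    simp only [coeff_zero_X_mul, coeff_derivative] at h0
    push_cast at h0
    linear_combination h0
  · have hn := hcoeff (n + 1)
    rcases n with _ | _ | n <;>
      simp only [coeff_succ_X_mul, coeff_zero_X_mul, coeff_derivative] at hn <;>
      push_cast at hn ⊢ <;>
      linear_combination hn

lemma ofReal_add_ne_zero (hL : 0 ≤ L.re) {x : ℝ} (hx : 0 < x) : (x : ℂ) + L ≠ 0 := fun h => by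
  have := congrArg Complex.re h
  rw [Complex.add_re, Complex.ofReal_re, Complex.zero_re] at this
  linarith

lemma ModeRecurrence.eq_zero_of_le (h : ModeRecurrence L a) (hL : 0 ≤ L.re) {m : ℕ} (hm : 1 ≤ m)
    (h0 : a m = 0) (h1 : a (m + 1) = 0) {n : ℕ} (hn : m ≤ n) : a n = 0 := by
  suffices a n = 0 ∧ a (n + 1) = 0 from this.1
  induction n, hn using Nat.le_induction with
  | base => exact ⟨h0, h1⟩
  | succ n hn ih =>
    have hstep := h.add_two n
    rw [ih.1, ih.2, mul_zero, mul_zero, sub_zero] at hstep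
    have hnL := ofReal_add_ne_zero hL (Nat.cast_pos.mpr (hm.trans hn))
    have hn2 : (n : ℂ) + 2 ≠ 0 := mod_cast (n + 1).succ_ne_zero
    exact ⟨ih.2, (mul_eq_zero.mp hstep).resolve_left
      (mul_ne_zero (mul_ne_zero (by norm_num) hn2) (mod_cast hnL))⟩

/-- The coefficients `gₙ = (2 n + L - 3) aₙ` of `(2 s ∂ + L - 3) ∑ aₙ sⁿ`. -/
def eulerCoeff (L : ℂ) (a : ℕ → ℂ) (n : ℕ) : ℂ :=
  (2 * n + L - 3) * a n

/-- The averages `bₙ = ∑_{k ≤ n} 2 ^ (k - n - 1) gₖ`, the coefficients of `∑ gₙ sⁿ / (2 - s)`. -/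
noncomputable def dyadicAvg (g : ℕ → ℂ) : ℕ → ℂ
  | 0 => g 0 / 2
  | n + 1 => (dyadicAvg g n + g (n + 1)) / 2

lemma ModeRecurrence.summed (h : ModeRecurrence L a) (n : ℕ) :
    4 * ((n : ℂ) + 2) * (n + L) * a (n + 2) =
      (2 * n + L + 4) * eulerCoeff L a (n + 1) + 4 * dyadicAvg (eulerCoeff L a) n := by
  induction n with
  | zero =>
    have h0 := h.zero
    have h1 := h.add_two 0
    simp only [dyadicAvg, eulerCoeff]
    push_cast at h1 ⊢
    linear_combination h1 / 2 + h0 / 4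
  | succ n ih =>
    have hn := h.add_two (n + 1)
    simp only [dyadicAvg, eulerCoeff] at ih ⊢
    push_cast at hn ih ⊢
    linear_combination hn / 2 + ih / 2

lemma ModeRecurrence.eulerCoeff_add_two (h : ModeRecurrence L a) (n : ℕ) :
    4 * ((n : ℂ) + 2) * (n + L) * eulerCoeff L a (n + 2) =
      (2 * n + 1 + L) * ((2 * n + 4 + L) * eulerCoeff L a (n + 1) +
        4 * dyadicAvg (eulerCoeff L a) n) := by
  rw [show eulerCoeff L a (n + 2) = (2 * n + 1 + L) * a (n + 2) by
    rw [eulerCoeff]; push_cast; ring]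
  linear_combination (2 * (n : ℂ) + 1 + L) * h.summed n

end Recurrence

section Cone

lemma add_le_of_weighted_sq_le {p q r μ : ℝ} (hμ : 0 < μ) (hr : 0 ≤ r)
    (h : (1 + μ) * p ^ 2 + (1 + μ⁻¹) * q ^ 2 ≤ r ^ 2) : p + q ≤ r := by
  refine (abs_le_of_sq_le_sq' (?_ : (p + q) ^ 2 ≤ r ^ 2) hr).2
  have hgap : (p + q) ^ 2 + (μ * p - q) ^ 2 / μ = (1 + μ) * p ^ 2 + (1 + μ⁻¹) * q ^ 2 := by
    field_simp
    ring
  have := div_nonneg (sq_nonneg (μ * p - q)) hμ.le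
  linarith

lemma sq_norm_eq (z : ℂ) : ‖z‖ ^ 2 = z.re ^ 2 + z.im ^ 2 := by
  rw [Complex.sq_norm, Complex.normSq_apply, sq, sq]

variable {L b g g' : ℂ} {n R R' : ℝ}

/-- The inequality under which the cone condition `‖b‖ ≤ R ‖g‖` at step `n` of the recurrence
implies the cone condition with constant `R'` at the next step. -/
def ConeStep (L : ℂ) (n R R' : ℝ) : Prop :=
  ‖2 * (n : ℂ) + 1 + L‖ * ‖2 * (n : ℂ) + L - 4 * (R ^ 2 - 1 : ℝ)‖ +
      2 * (R ^ 2 - 1) / R' * (n + 2) * ‖(n : ℂ) + L‖ ≤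
    R * ‖2 * (n : ℂ) + 1 + L‖ * ‖2 * (n : ℂ) + L‖

lemma mul_norm_add_le (hR : 1 ≤ R) (h : ‖b‖ ≤ R * ‖g‖) :
    R * ‖b + g‖ ≤ ‖b + (R ^ 2 : ℝ) * g‖ := by
  refine (abs_le_of_sq_le_sq' ?_ (norm_nonneg _)).2
  have hsq : ‖b‖ ^ 2 ≤ (R * ‖g‖) ^ 2 := by gcongr
  have hR2 : 0 ≤ R ^ 2 - 1 := by nlinarith
  simp only [mul_pow, sq_norm_eq, Complex.add_re, Complex.add_im, Complex.re_ofReal_mul,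
    Complex.im_ofReal_mul] at hsq ⊢
  nlinarith

lemma mul_norm_mul_norm_add_le (hR : 1 ≤ R) (h : ‖b‖ ≤ R * ‖g‖) :
    R * ‖2 * (n : ℂ) + L‖ * ‖b + g‖ ≤ (R ^ 2 - 1) * ‖(2 * (n : ℂ) + 4 + L) * g + 4 * b‖ +
      ‖2 * (n : ℂ) + L - 4 * (R ^ 2 - 1 : ℝ)‖ * ‖b + g‖ := by
  have hsplit : (2 * (n : ℂ) + L) * (b + (R ^ 2 : ℝ) * g) =
      (R ^ 2 - 1 : ℝ) * ((2 * (n : ℂ) + 4 + L) * g + 4 * b) +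
        (2 * (n : ℂ) + L - 4 * (R ^ 2 - 1 : ℝ)) * (b + g) := by
    push_cast
    ring
  calc R * ‖2 * (n : ℂ) + L‖ * ‖b + g‖ = ‖2 * (n : ℂ) + L‖ * (R * ‖b + g‖) := by ring
    _ ≤ ‖2 * (n : ℂ) + L‖ * ‖b + (R ^ 2 : ℝ) * g‖ := by
      gcongr
      exact mul_norm_add_le hR h
    _ ≤ _ := by
      rw [← norm_mul, hsplit]
      refine (norm_add_le _ _).trans_eq ?_
      rw [norm_mul, norm_mul, Complex.norm_of_nonneg (by nlinarith)]

lemma ConeStep.propagate (hstep : ConeStep L n R R') (hL : 0 ≤ L.re) (hn : 0 < n) (hR : 1 < R)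
    (hR' : 0 < R') (hg : g ≠ 0) (hb : ‖b‖ ≤ R * ‖g‖)
    (h : 4 * ((n : ℂ) + 2) * (n + L) * g' =
      (2 * n + 1 + L) * ((2 * n + 4 + L) * g + 4 * b)) :
    g' ≠ 0 ∧ ‖(b + g) / 2‖ ≤ R' * ‖g'‖ := by
  have hn0 : (n : ℂ) + L ≠ 0 := ofReal_add_ne_zero hL hn
  have hn1 : 2 * (n : ℂ) + 1 + L ≠ 0 := by
    exact_mod_cast ofReal_add_ne_zero hL (x := 2 * n + 1) (by linarith)
  have hn2 : 2 * (n : ℂ) + L ≠ 0 := by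
    exact_mod_cast ofReal_add_ne_zero hL (x := 2 * n) (by linarith)
  have hg' : 4 * (n + 2) * ‖(n : ℂ) + L‖ * ‖g'‖ =
      ‖2 * (n : ℂ) + 1 + L‖ * ‖(2 * (n : ℂ) + 4 + L) * g + 4 * b‖ := by
    rw [← norm_mul, ← h, norm_mul, norm_mul, norm_mul, Complex.norm_ofNat,
      ← Complex.norm_of_nonneg (r := n + 2) (by linarith)]
    push_cast
    rfl
  have hle : ‖b + g‖ ≤ 2 * R' * ‖g'‖ := by
    have hκ : 0 < R ^ 2 - 1 := by nlinarith
    have hpos : 0 < 2 * (R ^ 2 - 1) / R' * (n + 2) * ‖(n : ℂ) + L‖ := by positivity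
    refine le_of_mul_le_mul_left ?_ hpos
    have h1 := mul_le_mul_of_nonneg_right hstep (norm_nonneg (b + g))
    have h2 := mul_le_mul_of_nonneg_left (mul_norm_mul_norm_add_le (n := n) (L := L) hR.le hb)
      (norm_nonneg (2 * (n : ℂ) + 1 + L))
    have h3 : 2 * (R ^ 2 - 1) / R' * (n + 2) * ‖(n : ℂ) + L‖ * (2 * R' * ‖g'‖) =
        (R ^ 2 - 1) * (4 * (n + 2) * ‖(n : ℂ) + L‖ * ‖g'‖) := by
      field_simp
      ring
    rw [h3, hg']
    linarith
  refine ⟨?_, ?_⟩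
  · rintro rfl
    obtain rfl : b = -g := eq_neg_of_add_eq_zero_left (by simpa using hle)
    have hzero : (2 * (n : ℂ) + 1 + L) * ((2 * n + L) * g) = 0 := by linear_combination -h
    exact mul_ne_zero hn1 (mul_ne_zero hn2 hg) hzero
  · rw [norm_div, Complex.norm_ofNat]
    linarith

-- Squaring turns the next three inequalities into polynomial inequalities in `Re L ≥ 0` and `Im L`.
-- The weight `μ` is chosen to make these hold, and the square completes the terms in `(Im L)²`.
lemma coneStep_one (hL : 0 ≤ L.re) : ConeStep L 1 (21 / 20) (4 / 3) := by
  refine add_le_of_weighted_sq_le (μ := 1 / 13) (by norm_num) (by positivity) ?_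
  simp only [mul_pow, sq_norm_eq]
  norm_num
  generalize L.re = x at *
  generalize L.im = y
  nlinarith [sq_nonneg (y ^ 2 - 21), pow_nonneg hL 2, pow_nonneg hL 3, pow_nonneg hL 4,
    mul_nonneg hL (sq_nonneg y), mul_nonneg (pow_nonneg hL 2) (sq_nonneg y)]

lemma coneStep_two (hL : 0 ≤ L.re) : ConeStep L 2 (4 / 3) (3 / 2) := by
  refine add_le_of_weighted_sq_le (μ := 1 / 2) (by norm_num) (by positivity) ?_
  simp only [mul_pow, sq_norm_eq]
  norm_num
  generalize L.re = x at *
  generalize L.im = y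
  nlinarith [sq_nonneg (y ^ 2 - 31), pow_nonneg hL 2, pow_nonneg hL 3, pow_nonneg hL 4,
    mul_nonneg hL (sq_nonneg y), mul_nonneg (pow_nonneg hL 2) (sq_nonneg y)]

lemma coneStep_of_three_le (hL : 0 ≤ L.re) (hn : 3 ≤ n) : ConeStep L n (3 / 2) (3 / 2) := by
  refine add_le_of_weighted_sq_le (μ := 5 / 8) (by norm_num) (by positivity) ?_
  obtain ⟨m, hm, rfl⟩ : ∃ m ≥ 0, n = m + 3 := ⟨n - 3, by linarith, by ring⟩
  simp only [mul_pow, sq_norm_eq]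
  norm_num
  generalize L.re = x at *
  generalize L.im = y
  have hx : 0 ≤ x * (171600 + 140480 * m + 29120 * m ^ 2 + 800 * m ^ 3)
      + x ^ 2 * (37720 + 17680 * m + 1120 * m ^ 2) + x ^ 3 * (4680 + 720 * m) + 90 * x ^ 4
      + y ^ 2 * x * (4680 + 720 * m) + 180 * x ^ 2 * y ^ 2 := by positivity
  nlinarith [sq_nonneg (y ^ 2 - (10160 + 1040 * m + 320 * m ^ 2) / 180), pow_nonneg hm 2,
    pow_nonneg hm 3, pow_nonneg hm 4]

end Cone

section Asymptotics

variable {L : ℂ} {a : ℕ → ℂ}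

/-- The cone condition with constant `R` at step `n`: the average `bₙ` is at most `R` times the
next term `gₙ₊₁`, which does not vanish. -/
def InCone (L : ℂ) (a : ℕ → ℂ) (n : ℕ) (R : ℝ) : Prop :=
  eulerCoeff L a (n + 1) ≠ 0 ∧
    ‖dyadicAvg (eulerCoeff L a) n‖ ≤ R * ‖eulerCoeff L a (n + 1)‖

lemma InCone.mono {n : ℕ} {R R' : ℝ} (h : InCone L a n R) (hR : R ≤ R') : InCone L a n R' :=
  ⟨h.1, h.2.trans (mul_le_mul_of_nonneg_right hR (norm_nonneg _))⟩

lemma ConeStep.inCone_succ {n : ℕ} {R R' : ℝ} (hstep : ConeStep L n R R') (hL : 0 ≤ L.re)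
    (h : ModeRecurrence L a) (hn : 1 ≤ n) (hR : 1 < R) (hR' : 0 < R') (hcone : InCone L a n R) :
    InCone L a (n + 1) R' :=
  hstep.propagate hL (Nat.cast_pos.mpr hn) hR hR' hcone.1 hcone.2
    (by simpa only [Complex.ofReal_natCast] using h.eulerCoeff_add_two n)

lemma ModeRecurrence.summed_zero (h : ModeRecurrence L a) :
    16 * (L * a 2) = dyadicAvg (eulerCoeff L a) 0 * (L ^ 2 + 6 * L + 16) := by
  have h0 := h.zero
  have h1 := h.add_two 0
  simp only [dyadicAvg, eulerCoeff]
  push_cast at h1 ⊢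
  linear_combination h1 + h0 * (L + 6) / 4

lemma ModeRecurrence.dyadicAvg_one_mul (h : ModeRecurrence L a) :
    dyadicAvg (eulerCoeff L a) 1 * ((L + 1) * (L ^ 2 + 6 * L + 16)) =
      4 * L * (L + 4) * eulerCoeff L a 2 := by
  have h2 := h.summed_zero
  have h0 := h.zero
  simp only [dyadicAvg, eulerCoeff] at h2 ⊢
  push_cast at h2 ⊢
  linear_combination -(L + 1) * (L + 4) / 4 * h2 + h0 * ((L + 1) * (L ^ 2 + 6 * L + 16)) / 16

lemma norm_cone_one_le (hL : 0 ≤ L.re) :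
    80 * (‖L‖ * ‖L + 4‖) ≤ 21 * (‖L + 1‖ * ‖L ^ 2 + 6 * L + 16‖) := by
  refine (abs_le_of_sq_le_sq' ?_ (by positivity)).2
  simp only [mul_pow, sq_norm_eq]
  norm_num [pow_two]
  generalize L.re = x at *
  generalize L.im = y
  have hx : 0 ≤ x * (310464 + 42292 * y ^ 2 + 6174 * y ^ 4) +
      x ^ 2 * (209828 + 30418 * y ^ 2 + 1323 * y ^ 4) + x ^ 3 * (98740 + 12348 * y ^ 2) +
      x ^ 4 * (34613 + 1323 * y ^ 2) + 6174 * x ^ 5 + 441 * x ^ 6 := by positivity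
  have hy : 0 ≤ 441 * y ^ 2 * (y ^ 2 - 4195 / 882) ^ 2 := by positivity
  nlinarith [sq_nonneg y]

lemma ModeRecurrence.inCone_one (h : ModeRecurrence L a) (hL : 0 ≤ L.re) (hL1 : L ≠ 1)
    (hL3 : L ≠ 3) (hne : ∃ n, a n ≠ 0) : InCone L a 1 (21 / 20) := by
  have hL1' : L + 1 ≠ 0 := by
    simpa [add_comm] using ofReal_add_ne_zero hL one_pos
  have hL4 : L + 4 ≠ 0 := by
    simpa [add_comm] using ofReal_add_ne_zero hL four_pos
  have hquad : L ^ 2 + 6 * L + 16 ≠ 0 := fun hz => by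
    have hle := norm_cone_one_le hL
    rw [hz, norm_zero, mul_zero, mul_zero, ← norm_mul] at hle
    have hL0 : L = 0 := by simpa [hL4] using hle.antisymm (by positivity)
    norm_num [hL0] at hz
  have ha2 : a 2 ≠ 0 := fun ha2 => by
    have ha0 : a 0 = 0 := by
      simpa [ha2, hquad, dyadicAvg, eulerCoeff, sub_ne_zero.mpr hL3] using h.summed_zero
    have ha1 : a 1 = 0 := by simpa [ha0, sub_ne_zero.mpr hL1] using h.zero
    obtain ⟨n, hn⟩ := hne
    rcases n.eq_zero_or_pos with rfl | hpos
    · exact hn ha0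
    · exact hn (h.eq_zero_of_le hL le_rfl ha1 ha2 hpos)
  refine ⟨mul_ne_zero ?_ ha2, ?_⟩
  · convert hL1' using 1
    push_cast
    ring
  · have hnorm := congrArg norm h.dyadicAvg_one_mul
    simp only [norm_mul, Complex.norm_ofNat] at hnorm
    have hpos : 0 < ‖L + 1‖ * ‖L ^ 2 + 6 * L + 16‖ := by positivity
    refine le_of_mul_le_mul_right ?_ hpos
    rw [hnorm]
    linarith [mul_le_mul_of_nonneg_right (norm_cone_one_le hL) (norm_nonneg (eulerCoeff L a 2))]

lemma ModeRecurrence.inCone (h : ModeRecurrence L a) (hL : 0 ≤ L.re) (hL1 : L ≠ 1)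
    (hL3 : L ≠ 3) (hne : ∃ n, a n ≠ 0) {n : ℕ} (hn : 1 ≤ n) : InCone L a n (3 / 2) := by
  have h1 := h.inCone_one hL hL1 hL3 hne
  have h2 : InCone L a 2 (4 / 3) :=
    ConeStep.inCone_succ (mod_cast coneStep_one hL) hL h le_rfl (by norm_num) (by norm_num) h1
  have h3 : InCone L a 3 (3 / 2) :=
    ConeStep.inCone_succ (mod_cast coneStep_two hL) hL h one_le_two (by norm_num) (by norm_num) h2
  obtain rfl | rfl | hn3 : n = 1 ∨ n = 2 ∨ 3 ≤ n := by omega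
  · exact h1.mono (by norm_num)
  · exact h2.mono (by norm_num)
  · induction n, hn3 using Nat.le_induction with
    | base => exact h3
    | succ n hn3 ih =>
      have hn1 : 1 ≤ n := by omega
      exact (coneStep_of_three_le hL (mod_cast hn3)).inCone_succ hL h hn1 (by norm_num)
        (by norm_num) (ih hn1)

lemma natCast_le_norm_add (hL : 0 ≤ L.re) (n : ℕ) : (n : ℝ) ≤ ‖(n : ℂ) + L‖ :=
  le_trans (by simpa using hL) (Complex.re_le_norm _)

lemma norm_natCast_mul_add_le {y z : ℂ} (n : ℕ) : ‖n * y + z‖ ≤ (n + 1) * (‖y‖ + ‖z‖) := by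
  refine (norm_add_le _ _).trans ?_
  rw [norm_mul, Complex.norm_natCast]
  nlinarith [norm_nonneg y, mul_nonneg n.cast_nonneg (norm_nonneg z)]

lemma recurrence_denominator_ne_zero (hL : 0 ≤ L.re) (n : ℕ) :
    4 * (((n + 1 : ℕ) : ℂ) + 2) * ((n + 1 : ℕ) + L) ≠ 0 := by
  have hn : ((n + 1 : ℕ) : ℂ) + 2 ≠ 0 := mod_cast (n + 2).succ_ne_zero
  have hnL : ((n + 1 : ℕ) : ℂ) + L ≠ 0 :=
    mod_cast ofReal_add_ne_zero hL (Nat.cast_pos.mpr n.succ_pos)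
  exact mul_ne_zero (mul_ne_zero (by norm_num) hn) hnL

lemma norm_div_recurrence_denominator_le {N : ℂ} (hL : 0 ≤ L.re) (n : ℕ) :
    ‖N / (4 * ((n + 1 : ℕ) + 2) * ((n + 1 : ℕ) + L))‖ ≤ ‖N‖ / ((n : ℝ) + 1) ^ 2 := by
  have hnL := natCast_le_norm_add hL (n + 1)
  have hn : ‖((n + 1 : ℕ) + 2 : ℂ)‖ = (n + 1 : ℕ) + 2 := by
    exact_mod_cast Complex.norm_natCast (n + 3)
  rw [norm_div, norm_mul, norm_mul, Complex.norm_ofNat, hn]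
  push_cast at hnL ⊢
  gcongr
  nlinarith

/-- The quotient `bₙ / gₙ₊₁`, which tends to `1` on solutions in the cone. -/
noncomputable def avgRatio (L : ℂ) (a : ℕ → ℂ) (n : ℕ) : ℂ :=
  dyadicAvg (eulerCoeff L a) n / eulerCoeff L a (n + 1)

lemma InCone.norm_avgRatio_le {n : ℕ} {R : ℝ} (h : InCone L a n R) : ‖avgRatio L a n‖ ≤ R := by
  rw [avgRatio, norm_div, div_le_iff₀ (norm_pos_iff.mpr h.1)]
  exact h.2

lemma InCone.dyadicAvg_eq {n : ℕ} {R : ℝ} (h : InCone L a n R) :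
    dyadicAvg (eulerCoeff L a) n = avgRatio L a n * eulerCoeff L a (n + 1) :=
  (div_mul_cancel₀ _ h.1).symm

lemma InCone.avgRatio_succ_sub_one {n : ℕ} {R R' : ℝ}
    (hn : InCone L a n R) (hn' : InCone L a (n + 1) R') :
    avgRatio L a (n + 1) - 1 = (avgRatio L a n - 1) / 2 +
      avgRatio L a (n + 1) * (1 - eulerCoeff L a (n + 2) / eulerCoeff L a (n + 1)) := by
  have h1 := hn.1
  have h2 : eulerCoeff L a (n + 2) ≠ 0 := hn'.1
  simp only [avgRatio, dyadicAvg]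
  field_simp
  ring

lemma ModeRecurrence.eulerCoeff_div_sub_one {n : ℕ} {R : ℝ} (h : ModeRecurrence L a)
    (hL : 0 ≤ L.re) (hcone : InCone L a (n + 1) R) :
    eulerCoeff L a (n + 3) / eulerCoeff L a (n + 2) - 1 =
      (n * 2 + (L ^ 2 - 3 * L + 6) + avgRatio L a (n + 1) * (n * 8 + (4 * L + 12))) /
        (4 * ((n + 1 : ℕ) + 2) * ((n + 1 : ℕ) + L)) := by
  have hg : eulerCoeff L a (n + 2) ≠ 0 := hcone.1
  have hrec := h.eulerCoeff_add_two (n + 1)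
  rw [hcone.dyadicAvg_eq] at hrec
  rw [div_sub_one hg, div_eq_div_iff hg (recurrence_denominator_ne_zero hL n)]
  push_cast at hrec ⊢
  linear_combination hrec

lemma ModeRecurrence.exists_norm_eulerCoeff_div_sub_one_le (h : ModeRecurrence L a)
    (hL : 0 ≤ L.re) {R : ℝ} (hcone : ∀ n, InCone L a (n + 1) R) :
    ∃ K, ∀ n : ℕ, ‖eulerCoeff L a (n + 3) / eulerCoeff L a (n + 2) - 1‖ ≤ K / (n + 1) := by
  refine ⟨‖(2 : ℂ)‖ + ‖L ^ 2 - 3 * L + 6‖ + R * (‖(8 : ℂ)‖ + ‖4 * L + 12‖), fun n => ?_⟩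
  rw [h.eulerCoeff_div_sub_one hL (hcone n)]
  refine (norm_div_recurrence_denominator_le hL n).trans ?_
  have hR := (hcone n).norm_avgRatio_le
  rw [div_le_div_iff₀ (by positivity) (by positivity), pow_two ((n : ℝ) + 1), ← mul_assoc]
  gcongr
  calc ‖n * 2 + (L ^ 2 - 3 * L + 6) + avgRatio L a (n + 1) * (n * 8 + (4 * L + 12))‖
      ≤ (n + 1) * (‖(2 : ℂ)‖ + ‖L ^ 2 - 3 * L + 6‖) +
        R * ((n + 1) * (‖(8 : ℂ)‖ + ‖4 * L + 12‖)) := by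
        refine norm_add_le_of_le (norm_natCast_mul_add_le n) ?_
        exact norm_mul_le_of_le hR (norm_natCast_mul_add_le n)
    _ = _ := by ring

lemma summable_const_div_add_one_sq (K : ℝ) : Summable fun n : ℕ => K / ((n : ℝ) + 1) ^ 2 := by
  simpa [div_eq_mul_inv] using
    (((summable_nat_add_iff 1).mpr (Real.summable_nat_pow_inv.mpr one_lt_two)).mul_left K)

lemma ModeRecurrence.summable_avgRatio_sub_one (h : ModeRecurrence L a) (hL : 0 ≤ L.re) {R : ℝ}
    (hcone : ∀ n, InCone L a (n + 1) R) :
    Summable fun n : ℕ => ‖avgRatio L a (n + 1) - 1‖ / ((n : ℝ) + 1) := by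
  obtain ⟨K, hK⟩ := h.exists_norm_eulerCoeff_div_sub_one_le hL hcone
  have hR : 0 ≤ R := (norm_nonneg _).trans (hcone 0).norm_avgRatio_le
  have hK0 : 0 ≤ K := by simpa using (norm_nonneg _).trans (hK 0)
  refine summable_of_le_mul_add (θ := 1 / 2) (by norm_num) (fun n => by positivity)
    (summable_const_div_add_one_sq (R * K)) (fun n => by positivity) fun n => ?_
  have hstep : ‖avgRatio L a (n + 2) - 1‖ ≤
      ‖avgRatio L a (n + 1) - 1‖ / 2 + R * (K / (n + 1)) := by
    rw [(hcone n).avgRatio_succ_sub_one (hcone (n + 1))]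
    refine norm_add_le_of_le (by rw [norm_div, Complex.norm_ofNat]) ?_
    exact norm_mul_le_of_le (hcone (n + 1)).norm_avgRatio_le ((norm_sub_rev _ _).trans_le (hK n))
  calc ‖avgRatio L a (n + 2) - 1‖ / ((n + 1 : ℕ) + 1)
      ≤ ‖avgRatio L a (n + 2) - 1‖ / ((n : ℝ) + 1) := by
        gcongr
        exact n.le_succ
    _ ≤ (‖avgRatio L a (n + 1) - 1‖ / 2 + R * (K / (n + 1))) / ((n : ℝ) + 1) := by gcongr
    _ = _ := by
        field_simp

/-- The quotients of consecutive Taylor coefficients of `(1 - s) ^ (-5 / 2)`, the singular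
behaviour `ρ ^ (-5)` at `ρ = 0`. -/
noncomputable def singularRatio (n : ℕ) : ℝ :=
  (n + 5 / 2) / (n + 1)

lemma one_le_singularRatio (n : ℕ) : 1 ≤ singularRatio n := by
  rw [singularRatio, one_le_div (by positivity)]
  linarith

lemma ModeRecurrence.div_sub_singularRatio {n : ℕ} {R : ℝ} (h : ModeRecurrence L a)
    (hL : 0 ≤ L.re) (hcone : InCone L a (n + 1) R) :
    a (n + 3) / a (n + 2) - singularRatio (n + 2) =
      (L ^ 2 - 7 * L - 8 + (avgRatio L a (n + 1) - 1) * (n * 8 + (4 * L + 4))) /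
        (4 * ((n + 1 : ℕ) + 2) * ((n + 1 : ℕ) + L)) := by
  have ha : a (n + 2) ≠ 0 := right_ne_zero_of_mul hcone.1
  have hn2 : ((n + 1 : ℕ) : ℂ) + 2 ≠ 0 := mod_cast (n + 2).succ_ne_zero
  have hrec := h.summed (n + 1)
  rw [hcone.dyadicAvg_eq, eulerCoeff] at hrec
  have hq : (singularRatio (n + 2) : ℂ) = ((n + 1 : ℕ) + 7 / 2) / ((n + 1 : ℕ) + 2) := by
    rw [singularRatio]
    push_cast
    ring
  rw [hq, div_sub_div _ _ ha hn2, div_eq_div_iff (mul_ne_zero ha hn2)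
    (recurrence_denominator_ne_zero hL n)]
  push_cast at hrec ⊢
  linear_combination ((n : ℂ) + 1 + 2) * hrec

lemma ModeRecurrence.summable_ratio (h : ModeRecurrence L a) (hL : 0 ≤ L.re) {R : ℝ}
    (hcone : ∀ n, InCone L a (n + 1) R) :
    Summable fun n => ‖a (n + 3) / (a (n + 2) * singularRatio (n + 2)) - 1‖ := by
  refine .of_nonneg_of_le (fun _ => norm_nonneg _) (fun n => ?_)
    ((summable_const_div_add_one_sq ‖L ^ 2 - 7 * L - 8‖).add
      ((h.summable_avgRatio_sub_one hL hcone).mul_right (‖(8 : ℂ)‖ + ‖4 * L + 4‖)))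
  have hq := one_le_singularRatio (n + 2)
  have hq0 : (singularRatio (n + 2) : ℂ) ≠ 0 := mod_cast (one_pos.trans_le hq).ne'
  calc ‖a (n + 3) / (a (n + 2) * singularRatio (n + 2)) - 1‖
      = ‖a (n + 3) / a (n + 2) - singularRatio (n + 2)‖ / singularRatio (n + 2) := by
        rw [← div_div, div_sub_one hq0, norm_div, Complex.norm_of_nonneg (one_pos.trans_le hq).le]
    _ ≤ ‖a (n + 3) / a (n + 2) - singularRatio (n + 2)‖ := div_le_self (norm_nonneg _) hq
    _ ≤ (‖L ^ 2 - 7 * L - 8‖ +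
          ‖avgRatio L a (n + 1) - 1‖ * ((n + 1) * (‖(8 : ℂ)‖ + ‖4 * L + 4‖))) /
        ((n : ℝ) + 1) ^ 2 := by
        rw [h.div_sub_singularRatio hL (hcone n)]
        refine (norm_div_recurrence_denominator_le hL n).trans ?_
        gcongr
        exact norm_add_le_of_le le_rfl (norm_mul_le_of_le le_rfl (norm_natCast_mul_add_le n))
    _ = _ := by
        field_simp

end Asymptotics

section FormalSolutions

variable {L : ℂ} {A : ℂ⟦X⟧}

lemma ConvergesOnDisc.of_tendsto_ratio (h0 : ∀ᶠ n in atTop, coeff n A ≠ 0)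
    (h : Tendsto (fun n => coeff (n + 1) A / coeff n A) atTop (𝓝 1)) : ConvergesOnDisc A := by
  refine .of_summable fun z hz => ?_
  obtain ⟨r, hzr, hr⟩ := exists_between hz
  have hlim : Tendsto (fun n => ‖coeff (n + 1) A / coeff n A‖ * ‖z‖) atTop (𝓝 ‖z‖) := by
    simpa using h.norm.mul_const ‖z‖
  refine summable_of_ratio_norm_eventually_le hr ?_
  filter_upwards [h0, hlim.eventually_le_const hzr] with n hn hle
  calc ‖coeff (n + 1) A * z ^ (n + 1)‖
      = ‖coeff (n + 1) A / coeff n A‖ * ‖z‖ * ‖coeff n A * z ^ n‖ := by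
        rw [← norm_mul, ← norm_mul]
        congr 1
        field_simp
        ring
    _ ≤ r * ‖coeff n A * z ^ n‖ := by gcongr

lemma convergesOnDisc_polynomial (p : Polynomial ℂ) : ConvergesOnDisc (p : ℂ⟦X⟧) :=
  .of_summable fun z _ => summable_of_hasFiniteSupport <|
    p.support.finite_toSet.subset fun n hn => by
      simpa using left_ne_zero_of_mul hn

lemma psum_polynomial (p : Polynomial ℂ) (z : ℂ) : psum (p : ℂ⟦X⟧) z = p.eval z := by
  rw [psum, p.eval_eq_sum, Polynomial.sum_def]
  simp only [Polynomial.coeff_coe]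
  exact tsum_eq_sum fun n hn => by rw [Polynomial.notMem_support_iff.mp hn, zero_mul]

lemma tendsto_singularRatio : Tendsto singularRatio atTop (𝓝 1) := by
  have h : singularRatio = fun n : ℕ => 1 + 3 / 2 * (1 / ((n : ℝ) + 1)) := by
    ext n
    rw [singularRatio]
    field_simp
    ring
  rw [h]
  simpa using (tendsto_one_div_add_atTop_nhds_zero_nat.const_mul (3 / 2 : ℝ)).const_add 1

lemma ModeRecurrence.convergesOnDisc (h : ModeRecurrence L fun n => coeff n A) (hL : 0 ≤ L.re)
    {R : ℝ} (hcone : ∀ n, InCone L (fun n => coeff n A) (n + 1) R) : ConvergesOnDisc A := by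
  have hne : ∀ n, coeff (n + 2) A ≠ 0 := fun n => right_ne_zero_of_mul (hcone n).1
  refine .of_tendsto_ratio (eventually_atTop.mpr ⟨2, fun n hn => ?_⟩) ?_
  · obtain ⟨n, rfl⟩ := Nat.exists_eq_add_of_le' hn
    exact hne n
  · have hquot := (tendsto_zero_iff_norm_tendsto_zero.mpr
      (h.summable_ratio hL hcone).tendsto_atTop_zero).add_const 1
    have hq : Tendsto (fun n => (singularRatio (n + 2) : ℂ)) atTop (𝓝 1) :=
      mod_cast (Complex.continuous_ofReal.tendsto 1).comp
        ((tendsto_add_atTop_iff_nat 2).mpr tendsto_singularRatio)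
    rw [← tendsto_add_atTop_iff_nat 2]
    refine ((hquot.mul hq).congr fun n => ?_).trans (by simp)
    have hq0 : (singularRatio (n + 2) : ℂ) ≠ 0 :=
      mod_cast (one_pos.trans_le (one_le_singularRatio (n + 2))).ne'
    rw [sub_add_cancel, ← div_div, div_mul_cancel₀ _ hq0]

lemma ModeRecurrence.eq_zero_of_bounded (h : ModeRecurrence L fun n => coeff n A)
    (hL : 0 ≤ L.re) (hL1 : L ≠ 1) (hL3 : L ≠ 3)
    (hbdd : ConvergesOnDisc A → ∃ M, ∀ s ∈ Ioo (0 : ℝ) 1, ‖psum A s‖ ≤ M) : A = 0 := by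
  by_contra hA
  have hcone := fun n : ℕ => h.inCone hL hL1 hL3
    (by simpa only [PowerSeries.ext_iff, map_zero, not_forall] using hA) (Nat.le_add_left 1 n)
  have hconv := h.convergesOnDisc hL hcone
  obtain ⟨w, hw⟩ := exists_eventually_le_re_mul (a := fun n => coeff (n + 2) A)
    (q := fun n => singularRatio (n + 2)) (fun n => right_ne_zero_of_mul (hcone n).1)
    (fun n => one_le_singularRatio _) (h.summable_ratio hL hcone)
  obtain ⟨M, hM⟩ := hbdd hconv
  refine not_bounded_psum hconv (w := w) ?_ hM
  obtain ⟨N, hN⟩ := eventually_atTop.mp hw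
  refine eventually_atTop.mpr ⟨N + 2, fun n hn => ?_⟩
  obtain ⟨n, rfl⟩ := Nat.exists_eq_add_of_le' (le_of_add_le_right hn)
  exact hN n (by omega)

lemma ModeRecurrence.eq_C_mul_X (h : ModeRecurrence 1 fun n => coeff n A) :
    A = (Polynomial.C (coeff 1 A) * Polynomial.X : Polynomial ℂ) := by
  have r0 := h.add_two 0
  have r1 := h.add_two 1
  push_cast at r0 r1
  have h0 : coeff 0 A = 0 := by linear_combination h.zero / 12
  have h2 : coeff 2 A = 0 := by linear_combination r0 / 16 - h0 / 8
  have h3 : coeff 3 A = 0 := by linear_combination r1 / 48 + 3 / 4 * h2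
  ext n
  rw [Polynomial.coeff_coe, Polynomial.coeff_C_mul_X]
  rcases n with _ | _ | n
  · simpa using h0
  · simp
  · simpa using h.eq_zero_of_le (by norm_num) (m := 2) one_le_two h2 h3 (Nat.le_add_left 2 n)

lemma ModeRecurrence.eq_C (h : ModeRecurrence 3 fun n => coeff n A) :
    A = (Polynomial.C (coeff 0 A) : Polynomial ℂ) := by
  have r0 := h.add_two 0
  push_cast at r0
  have h1 : coeff 1 A = 0 := by linear_combination h.zero / 16
  have h2 : coeff 2 A = 0 := by linear_combination r0 / 48 + 3 / 4 * h1
  ext n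
  rw [Polynomial.coeff_coe, Polynomial.coeff_C]
  rcases n with _ | n
  · simp
  · simpa using h.eq_zero_of_le (by norm_num) (m := 1) le_rfl h1 h2 (Nat.le_add_left 1 n)

end FormalSolutions

section LightCone

/-- The radial profile `f` in the variable `s = 1 - ρ²`, which vanishes on the light cone `ρ = 1`,
multiplied by `(2 - s)² = (1 + ρ²)²` so that the two eigenmodes become `s` and `1`. -/
noncomputable def lightCone (f : ℝ → ℂ) (s : ℝ) : ℂ :=
  (2 - (s : ℂ)) ^ 2 * f √(1 - s)

variable {L : ℂ} {f : ℝ → ℂ} {ρ : ℝ}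

lemma lightCone_one_sub_sq (hρ : 0 ≤ ρ) :
    lightCone f (1 - ρ ^ 2) = (1 + (ρ : ℂ) ^ 2) ^ 2 * f ρ := by
  rw [lightCone, sub_sub_cancel, Real.sqrt_sq hρ]
  push_cast
  ring

lemma sqrt_one_sub_le_one {s : ℝ} (hs : 0 ≤ s) : √(1 - s) ≤ 1 :=
  Real.sqrt_le_one.mpr (sub_le_self 1 hs)

lemma smooth_lightCone (hf : ContDiffOn ℝ ∞ f (Ioc 0 1)) : Smooth (lightCone f) := by
  have hsqrt : ContDiffOn ℝ ∞ (fun s : ℝ => √(1 - s)) (Ico 0 1) :=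
    ContDiffOn.sqrt (by fun_prop) fun s hs => (sub_pos.mpr hs.2).ne'
  have hsq : ContDiff ℝ ∞ fun s : ℝ => (2 - (s : ℂ)) ^ 2 :=
    (contDiff_const.sub Complex.ofRealCLM.contDiff).pow 2
  exact hsq.contDiffOn.mul (hf.comp hsqrt fun s hs =>
    ⟨Real.sqrt_pos.mpr (sub_pos.mpr hs.2), sqrt_one_sub_le_one hs.1⟩)

lemma continuousOn_lightCone (hf : ContinuousOn f (Icc 0 1)) :
    ContinuousOn (lightCone f) (Icc 0 1) := by
  have hsq : Continuous fun s : ℝ => (2 - (s : ℂ)) ^ 2 :=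
    (continuous_const.sub Complex.continuous_ofReal).pow 2
  exact hsq.continuousOn.mul
    (hf.comp (by fun_prop) fun s hs => ⟨Real.sqrt_nonneg _, sqrt_one_sub_le_one hs.1⟩)

lemma one_sub_sq_mem_Ioo (hρ : ρ ∈ Ioo (0 : ℝ) 1) : 1 - ρ ^ 2 ∈ Ioo (0 : ℝ) 1 :=
  ⟨sub_pos.mpr (pow_lt_one₀ hρ.1.le hρ.2 two_ne_zero), sub_lt_self 1 (pow_pos hρ.1 2)⟩

lemma one_sub_sq_mem_Icc (hρ : ρ ∈ Icc (0 : ℝ) 1) : 1 - ρ ^ 2 ∈ Icc (0 : ℝ) 1 :=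
  ⟨sub_nonneg.mpr (pow_le_one₀ hρ.1 hρ.2), sub_le_self 1 (sq_nonneg ρ)⟩

lemma hasDerivAt_comp_one_sub_sq {G : ℝ → ℂ} {G' : ℂ} (hG : HasDerivAt G G' (1 - ρ ^ 2)) :
    HasDerivAt (fun ρ => G (1 - ρ ^ 2)) (-(2 * ρ * G')) ρ := by
  have hsq : HasDerivAt (fun ρ : ℝ => 1 - ρ ^ 2) (-(2 * ρ)) ρ := by
    simpa using (hasDerivAt_pow 2 ρ).const_sub 1
  exact (hG.scomp ρ hsq).congr_deriv (by simp)

lemma hasDerivAt_ofReal (ρ : ℝ) : HasDerivAt (fun ρ : ℝ => (ρ : ℂ)) 1 ρ := by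
  simpa using (hasDerivAt_id ρ).ofReal_comp

lemma deriv_eq_of_eqOn_Ioo {G H : ℝ → ℂ} {G' H' : ℂ} (h : EqOn G H (Ioo 0 1))
    (hρ : ρ ∈ Ioo (0 : ℝ) 1) (hG : HasDerivAt G G' ρ) (hH : HasDerivAt H H' ρ) : G' = H' :=
  hG.unique (hH.congr_of_eventuallyEq (h.eventuallyEq_of_mem (Ioo_mem_nhds hρ.1 hρ.2)))

lemma hasDerivAt_deriv (hf : ContDiffOn ℝ ∞ f (Ioc 0 1)) (hρ : ρ ∈ Ioo (0 : ℝ) 1) :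
    HasDerivAt f (deriv f ρ) ρ ∧ HasDerivAt (deriv f) (iteratedDeriv 2 f ρ) ρ := by
  have hat : ContDiffAt ℝ ∞ f ρ := hf.contDiffAt (Ioc_mem_nhds hρ.1 hρ.2)
  have hat' : ContDiffAt ℝ ∞ (deriv f) ρ := hat.derivWithin (by simp)
  rw [iteratedDeriv_succ, iteratedDeriv_one]
  exact ⟨(hat.differentiableAt (by simp)).hasDerivAt, (hat'.differentiableAt (by simp)).hasDerivAt⟩

lemma D_lightCone_eq (hf : ContDiffOn ℝ ∞ f (Ioc 0 1)) (hρ : ρ ∈ Ioo (0 : ℝ) 1) :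
    -(2 * ρ * D (lightCone f) (1 - ρ ^ 2)) =
      (4 * (ρ + (ρ : ℂ) ^ 3)) * f ρ + (1 + (ρ : ℂ) ^ 2) ^ 2 * deriv f ρ := by
  have hweight := (((hasDerivAt_ofReal ρ).fun_pow 2).const_add 1).fun_pow 2
  refine deriv_eq_of_eqOn_Ioo (fun t ht => lightCone_one_sub_sq ht.1.le) hρ
    (hasDerivAt_comp_one_sub_sq ((smooth_lightCone hf).hasDerivAt (one_sub_sq_mem_Ioo hρ)))
    ((hweight.fun_mul (hasDerivAt_deriv hf hρ).1).congr_deriv ?_)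
  push_cast
  ring

lemma D_D_lightCone_eq (hf : ContDiffOn ℝ ∞ f (Ioc 0 1)) (hρ : ρ ∈ Ioo (0 : ℝ) 1) :
    -(2 * D (lightCone f) (1 - ρ ^ 2)) + 4 * (ρ : ℂ) ^ 2 * D (D (lightCone f)) (1 - ρ ^ 2) =
      (4 + 12 * (ρ : ℂ) ^ 2) * f ρ + 8 * (ρ + (ρ : ℂ) ^ 3) * deriv f ρ +
        (1 + (ρ : ℂ) ^ 2) ^ 2 * iteratedDeriv 2 f ρ := by
  have hid := hasDerivAt_ofReal ρ
  obtain ⟨hf', hf''⟩ := hasDerivAt_deriv hf hρ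
  have hF := hasDerivAt_comp_one_sub_sq
    ((smooth_D (smooth_lightCone hf)).hasDerivAt (one_sub_sq_mem_Ioo hρ))
  have h := deriv_eq_of_eqOn_Ioo (fun t ht => D_lightCone_eq hf ht) hρ
    ((hid.const_mul 2).fun_mul hF).fun_neg
    ((((hid.fun_add (hid.fun_pow 3)).const_mul 4).fun_mul hf').fun_add
      (((hid.fun_pow 2).const_add 1).fun_pow 2 |>.fun_mul hf''))
  push_cast at h
  linear_combination h

/-- The mode equation on `0 < ρ < 1` in dimension `7` with spectral parameter `L`. -/
def SolvesModeODE (L : ℂ) (f : ℝ → ℂ) : Prop :=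
  ∀ ρ ∈ Ioo (0 : ℝ) 1, (1 - (ρ : ℂ) ^ 2) * iteratedDeriv 2 f ρ
    + (6 / (ρ : ℂ) - 2 * (L + 2) * (ρ : ℂ)) * deriv f ρ
    - ((L + 1) * (L + 2) - 432 / (3 + 3 * (ρ : ℂ) ^ 2) ^ 2) * f ρ = 0

lemma one_add_sq_ne_zero (ρ : ℝ) : 1 + (ρ : ℂ) ^ 2 ≠ 0 :=
  mod_cast (by positivity : (1 + ρ ^ 2 : ℝ) ≠ 0)

lemma SolvesModeODE.clear_denominators (hode : SolvesModeODE L f) (hρ : ρ ∈ Ioo (0 : ℝ) 1) :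
    (ρ : ℂ) * (1 + (ρ : ℂ) ^ 2) ^ 2 * (1 - (ρ : ℂ) ^ 2) * iteratedDeriv 2 f ρ
      + (6 - 2 * (L + 2) * (ρ : ℂ) ^ 2) * (1 + (ρ : ℂ) ^ 2) ^ 2 * deriv f ρ
      - ρ * ((L + 1) * (L + 2) * (1 + (ρ : ℂ) ^ 2) ^ 2 - 48) * f ρ = 0 := by
  have hρ0 : (ρ : ℂ) ≠ 0 := mod_cast hρ.1.ne'
  have hw := one_add_sq_ne_zero ρ
  have h := hode ρ hρ
  rw [show 3 + 3 * (ρ : ℂ) ^ 2 = 3 * (1 + (ρ : ℂ) ^ 2) by ring] at h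
  field_simp at h
  linear_combination h / 9

lemma SolvesModeODE.odeOp_lightCone (hode : SolvesModeODE L f)
    (hf : ContDiffOn ℝ ∞ f (Ioc 0 1)) :
    EqOn (odeOp (.X * modeP) (modeQ L) (modeR L) (lightCone f)) 0 (Ico 0 1) := by
  have hIoo : EqOn (odeOp (.X * modeP) (modeQ L) (modeR L) (lightCone f)) 0 (Ioo 0 1) := by
    intro s hs
    obtain ⟨ρ, hρ, rfl⟩ : ∃ ρ ∈ Ioo (0 : ℝ) 1, 1 - ρ ^ 2 = s := by
      refine ⟨√(1 - s), ⟨Real.sqrt_pos.mpr (sub_pos.mpr hs.2), ?_⟩, ?_⟩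
      · exact (Real.sqrt_lt' one_pos).mpr (by linarith [hs.1])
      · rw [Real.sq_sqrt (sub_nonneg.mpr hs.2.le), sub_sub_cancel]
    have hρ0 : (ρ : ℂ) ≠ 0 := mod_cast hρ.1.ne'
    have h0 := lightCone_one_sub_sq (f := f) hρ.1.le
    have h1 := D_lightCone_eq hf hρ
    have h2 := D_D_lightCone_eq hf hρ
    refine mul_left_cancel₀ hρ0 ?_
    simp only [odeOp, modeP, modeQ, modeR, Polynomial.eval_add, Polynomial.eval_sub,
      Polynomial.eval_mul, Polynomial.eval_pow, Polynomial.eval_C, Polynomial.eval_X, Pi.zero_apply]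
    push_cast
    linear_combination (1 + (ρ : ℂ) ^ 2) * hode.clear_denominators hρ
      + (ρ : ℂ) * (1 - (ρ : ℂ) ^ 4) * h2
      - 1 / 2 * (2 * (1 - (ρ : ℂ) ^ 4) + (8 * (L - 1) - 12 * L * (1 - (ρ : ℂ) ^ 2)
        + (4 * L - 6) * (1 - (ρ : ℂ) ^ 2) ^ 2)) * h1
      - ρ * (L - 3) * (2 * L + 4 - (L - 2) * (1 - (ρ : ℂ) ^ 2)) * h0
  exact hIoo.of_subset_closure (smooth_odeOp (smooth_lightCone hf)).continuousOn
    continuousOn_const Ioo_subset_Ico_self (by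
      rw [closure_Ioo zero_ne_one]
      exact Ico_subset_Icc_self)

lemma modeP_eval_ne_zero {s : ℝ} (hs : s ∈ Ico (0 : ℝ) 1) : modeP.eval (s : ℂ) ≠ 0 := by
  have heval : modeP.eval (s : ℂ) = ((4 * (1 - s) * (2 - s) : ℝ) : ℂ) := by
    simp only [modeP, Polynomial.eval_add, Polynomial.eval_sub, Polynomial.eval_mul,
      Polynomial.eval_pow, Polynomial.eval_C, Polynomial.eval_X]
    push_cast
    ring
  have h1 : 0 < 1 - s := sub_pos.mpr hs.2
  have h2 : 0 < 2 - s := by linarith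
  rw [heval]
  exact mod_cast (by positivity : (4 * (1 - s) * (2 - s) : ℝ) ≠ 0)

lemma SolvesModeODE.modeRecurrence (hode : SolvesModeODE L f)
    (hf : ContDiffOn ℝ ∞ f (Ioc 0 1)) :
    ModeRecurrence L fun n => coeff n (taylor (lightCone f)) :=
  modeRecurrence_coeff (formalOdeOp_taylor_eq_zero (smooth_lightCone hf) (hode.odeOp_lightCone hf))

lemma SolvesModeODE.lightCone_eqOn_psum (hode : SolvesModeODE L f)
    (hf : ContDiffOn ℝ ∞ f (Ioc 0 1)) (hconv : ConvergesOnDisc (taylor (lightCone f))) :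
    EqOn (lightCone f) (fun s => psum (taylor (lightCone f)) s) (Ioo 0 1) :=
  eqOn_psum_taylor (fun _ => modeP_eval_ne_zero) (smooth_lightCone hf) (hode.odeOp_lightCone hf)
    hconv

lemma SolvesModeODE.exists_norm_psum_le (hode : SolvesModeODE L f)
    (hf : ContDiffOn ℝ ∞ f (Ioc 0 1)) (hcont : ContinuousOn f (Icc 0 1))
    (hconv : ConvergesOnDisc (taylor (lightCone f))) :
    ∃ M, ∀ s ∈ Ioo (0 : ℝ) 1, ‖psum (taylor (lightCone f)) s‖ ≤ M := by
  obtain ⟨M, hM⟩ := isCompact_Icc.exists_bound_of_continuousOn (continuousOn_lightCone hcont)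
  refine ⟨M, fun s hs => ?_⟩
  have h := hM s (Ioo_subset_Icc_self hs)
  rwa [hode.lightCone_eqOn_psum hf hconv hs] at h

lemma SolvesModeODE.eq_of_taylor_eq (hode : SolvesModeODE L f)
    (hf : ContDiffOn ℝ ∞ f (Ioc 0 1)) (hcont : ContinuousOn f (Icc 0 1)) {p : Polynomial ℂ}
    (hp : taylor (lightCone f) = p)
    (hρ : ρ ∈ Icc (0 : ℝ) 1) :
    f ρ = p.eval (1 - (ρ : ℂ) ^ 2) / (1 + (ρ : ℂ) ^ 2) ^ 2 := by
  have hIoo : EqOn (lightCone f) (fun s => p.eval (s : ℂ)) (Ioo 0 1) := fun s hs =>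
    (hode.lightCone_eqOn_psum hf (hp ▸ convergesOnDisc_polynomial p) hs).trans
      (by rw [hp]; exact psum_polynomial p s)
  have hIcc : EqOn (lightCone f) (fun s => p.eval (s : ℂ)) (Icc 0 1) :=
    hIoo.of_subset_closure (continuousOn_lightCone hcont)
      (p.continuous.comp Complex.continuous_ofReal).continuousOn Ioo_subset_Icc_self
      (closure_Ioo zero_ne_one).ge
  have h := hIcc (one_sub_sq_mem_Icc hρ)
  rw [lightCone_one_sub_sq hρ.1] at h
  push_cast at h
  rw [eq_div_iff (pow_ne_zero 2 (one_add_sq_ne_zero ρ)), mul_comm, h]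

end LightCone

end ModeODE

open ModeODE PowerSeries Set in
theorem mode_ODE_spectrum_d7_general {L : ℂ} (hL : 0 ≤ L.re) {f : ℝ → ℂ}
    (hcont : ContinuousOn f (Icc 0 1)) (hsmooth : ContDiffOn ℝ (⊤ : ℕ∞) f (Ioc 0 1))
    (hnonzero : ∃ ρ ∈ Icc (0 : ℝ) 1, f ρ ≠ 0) (hode : SolvesModeODE L f) :
    (L = 1 ∧ ∃ c : ℂ, ∀ ρ ∈ Icc (0 : ℝ) 1,
        f ρ = c * (((1 - ρ ^ 2) / (1 + ρ ^ 2) ^ 2 : ℝ) : ℂ)) ∨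
    (L = 3 ∧ ∃ c : ℂ, ∀ ρ ∈ Icc (0 : ℝ) 1,
        f ρ = c * (((((1 + ρ ^ 2) ^ 2)⁻¹ : ℝ)) : ℂ)) := by
  have hrec := hode.modeRecurrence hsmooth
  rcases eq_or_ne L 1 with rfl | h1
  · refine .inl ⟨rfl, coeff 1 (taylor (lightCone f)), fun ρ hρ => ?_⟩
    rw [hode.eq_of_taylor_eq hsmooth hcont hrec.eq_C_mul_X hρ]
    simp [mul_div_assoc]
  rcases eq_or_ne L 3 with rfl | h3
  · refine .inr ⟨rfl, coeff 0 (taylor (lightCone f)), fun ρ hρ => ?_⟩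
    rw [hode.eq_of_taylor_eq hsmooth hcont hrec.eq_C hρ]
    simp [div_eq_mul_inv]
  obtain ⟨ρ, hρ, hfρ⟩ := hnonzero
  have htaylor := hrec.eq_zero_of_bounded hL h1 h3 (hode.exists_norm_psum_le hsmooth hcont)
  refine absurd ?_ hfρ
  rw [hode.eq_of_taylor_eq hsmooth hcont (p := 0) (by rw [htaylor, Polynomial.coe_zero]) hρ,
    Polynomial.eval_zero, zero_div]

/-- For `d = 7` and `λ ∈ ℂ` with `Re λ ≥ 0`: any nonzero complex-valued function,
smooth on `[0,1]` and solving the mode ODE on `(0,1)`, satisfies either `λ = 1` and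
`f` is a multiple of `f₀(ρ) = (1−ρ²)/(1+ρ²)²`, or `λ = 3` and `f` is a multiple of
`f₁(ρ) = (1+ρ²)⁻²`. -/
theorem mode_ODE_spectrum_d7 (lam : ℂ) (hlam : 0 ≤ lam.re) (f : ℝ → ℂ)
    (hsmooth : ContDiffOn ℝ (⊤ : ℕ∞) f (Set.Icc 0 1))
    (hnonzero : ∃ ρ ∈ Set.Icc (0 : ℝ) 1, f ρ ≠ 0)
    (hode : ∀ ρ ∈ Set.Ioo (0 : ℝ) 1,
      (1 - (ρ : ℂ) ^ 2) * iteratedDeriv 2 f ρ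
        + (6 / (ρ : ℂ) - 2 * (lam + 2) * (ρ : ℂ)) * deriv f ρ
        - ((lam + 1) * (lam + 2) - 432 / (3 + 3 * (ρ : ℂ) ^ 2) ^ 2) * f ρ = 0) :
    (lam = 1 ∧ ∃ c : ℂ, ∀ ρ ∈ Set.Icc (0 : ℝ) 1,
        f ρ = c * (((1 - ρ ^ 2) / (1 + ρ ^ 2) ^ 2 : ℝ) : ℂ)) ∨
    (lam = 3 ∧ ∃ c : ℂ, ∀ ρ ∈ Set.Icc (0 : ℝ) 1,
        f ρ = c * (((((1 + ρ ^ 2) ^ 2)⁻¹ : ℝ)) : ℂ)) :=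
  mode_ODE_spectrum_d7_general hlam hsmooth.continuousOn
    (hsmooth.mono Set.Ioc_subset_Icc_self) hnonzero hode
end

section
/- Let d ≥ 5 and λ ∈ ℂ. Every complex-valued function f that is smooth on [0,1] and solves the mode ODE (1−ρ²)f''(ρ) + ((d−1)/ρ − 2(λ+2)ρ)f'(ρ) − ((λ+1)(λ+2) − 24(d−1)(d−4)/(d−4+3ρ²)²)f(ρ) = 0 on (0,1) is analytic on [0,1] (i.e., extends to a function analytic on an open neighborhood of [0,1] in ℝ). -/
/-!
Multiplied by `ρ`, the equation reads `P f'' + Q f' + R f = 0` with analytic coefficients and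
`P = ρ (1 - ρ²)`, whose zeros in `[0, 1]` are simple. As a first-order system for `y = (f, f')` it
is `P y' = M y`, or, in divergence form, `(P y)' = L y` with `L = P' + M`.

Write `pᵢ`, `Lᵢ`, `yᵢ` for the Taylor coefficients at a point `x`. Comparing coefficients,
`(n + 1) ∑ pᵢ yⱼ = ∑ Lᵢ yⱼ`, the sums running over `i + j = n + 1` and `i + j = n` respectively.
Where `|P|` is bounded below this bounds `yₙ₊₁` by the earlier coefficients. Near a zero of `P` the
dominant term is instead `n P' yₙ`, and the term `n P yₙ₊₁` of higher order is removed by a maximum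
principle: if `‖yₙ‖` is maximal at `x` and `ℓ` is a norming functional of `yₙ(x)`, then `ℓ(yₙ)` has
a critical point at `x`, so that `ℓ(yₙ₊₁) = 0`. Both cases bound `sup ‖yₙ₊₁‖` by a geometric
convolution of the earlier suprema. Hence these suprema grow at most geometrically, and the Taylor
series converge to `y`.
-/

open Filter Finset.Nat
open Set (EqOn Icc Ioo)
open Finset.HasAntidiagonal (antidiagonal mem_antidiagonal)
open scoped Topology ContDiff NNReal ENNReal Nat

section TaylorCoefficients

variable {E F G : Type*} [NormedAddCommGroup E] [NormedSpace ℝ E] [NormedAddCommGroup F]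
  [NormedSpace ℝ F] [NormedAddCommGroup G] [NormedSpace ℝ G] {s t : Set ℝ} {x : ℝ}

theorem taylorCoeffWithin_congr {f g : ℝ → E} (h : EqOn f g s) (n : ℕ) (hx : x ∈ s) :
    taylorCoeffWithin f n s x = taylorCoeffWithin g n s x := by
  rw [taylorCoeffWithin, taylorCoeffWithin, iteratedDerivWithin_congr h hx]

theorem taylorCoeffWithin_derivWithin (f : ℝ → E) (n : ℕ) :
    taylorCoeffWithin (derivWithin f s) n s x =
      (n + 1 : ℝ) • taylorCoeffWithin f (n + 1) s x := by
  rw [taylorCoeffWithin, taylorCoeffWithin, iteratedDerivWithin_succ', smul_smul,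
    Nat.factorial_succ]
  congr 1
  push_cast
  field_simp

theorem taylorCoeffWithin_subset {f : ℝ → E} (hst : s ⊆ t) (hs : UniqueDiffOn ℝ s)
    (ht : UniqueDiffOn ℝ t) (hf : ContDiffOn ℝ ∞ f t) (n : ℕ) (hx : x ∈ s) :
    taylorCoeffWithin f n s x = taylorCoeffWithin f n t x := by
  simp only [taylorCoeffWithin, iteratedDerivWithin_eq_iteratedFDerivWithin]
  rw [iteratedFDerivWithin_subset hst hs ht (hf.of_le (mod_cast le_top)) hx]

theorem hasDerivWithinAt_taylorCoeffWithin {f : ℝ → E} (hs : UniqueDiffOn ℝ s)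
    (hf : ContDiffOn ℝ ∞ f s) (n : ℕ) (hx : x ∈ s) :
    HasDerivWithinAt (taylorCoeffWithin f n s)
      ((n + 1 : ℝ) • taylorCoeffWithin f (n + 1) s x) s x := by
  rw [← taylorCoeffWithin_derivWithin, taylorCoeffWithin, ← iteratedDerivWithin_succ',
    iteratedDerivWithin_succ]
  exact (hf.differentiableOn_iteratedDerivWithin (mod_cast WithTop.coe_lt_top n) hs x
    hx).hasDerivWithinAt.const_smul _

theorem continuousOn_taylorCoeffWithin {f : ℝ → E} (hs : UniqueDiffOn ℝ s)
    (hf : ContDiffOn ℝ ∞ f s) (n : ℕ) : ContinuousOn (taylorCoeffWithin f n s) s :=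
  fun _ hx ↦ (hasDerivWithinAt_taylorCoeffWithin hs hf n hx).continuousWithinAt

theorem sum_antidiagonal_succ_smul_bilinear (B : E →L[ℝ] F →L[ℝ] G) (u : ℕ → E) (v : ℕ → F)
    (n : ℕ) :
    ∑ p ∈ antidiagonal n, (B (u p.1) ((p.2 + 1 : ℝ) • v (p.2 + 1)) +
        B ((p.1 + 1 : ℝ) • u (p.1 + 1)) (v p.2)) =
      (n + 1 : ℝ) • ∑ p ∈ antidiagonal (n + 1), B (u p.1) (v p.2) := by
  have split : (n + 1 : ℝ) • ∑ p ∈ antidiagonal (n + 1), B (u p.1) (v p.2) =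
      ∑ p ∈ antidiagonal (n + 1), (p.2 : ℝ) • B (u p.1) (v p.2) +
        ∑ p ∈ antidiagonal (n + 1), (p.1 : ℝ) • B (u p.1) (v p.2) := by
    rw [Finset.smul_sum, ← Finset.sum_add_distrib]
    refine Finset.sum_congr rfl fun p hp ↦ ?_
    rw [← add_smul, add_comm (p.2 : ℝ)]
    exact_mod_cast congrArg (fun k : ℕ ↦ (k : ℝ) • B (u p.1) (v p.2)) (mem_antidiagonal.1 hp).symm
  rw [split, sum_antidiagonal_succ', sum_antidiagonal_succ, Finset.sum_add_distrib]
  simp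

theorem taylorCoeffWithin_bilinear (B : E →L[ℝ] F →L[ℝ] G) {f : ℝ → E} {g : ℝ → F}
    (hs : UniqueDiffOn ℝ s) (hf : ContDiffOn ℝ ∞ f s) (hg : ContDiffOn ℝ ∞ g s) (n : ℕ)
    (hx : x ∈ s) :
    taylorCoeffWithin (fun y ↦ B (f y) (g y)) n s x =
      ∑ p ∈ antidiagonal n, B (taylorCoeffWithin f p.1 s x) (taylorCoeffWithin g p.2 s x) := by
  induction n generalizing x with
  | zero => simp [taylorCoeffWithin]
  | succ n ih =>
    have hB : ContDiffOn ℝ ∞ (fun y ↦ B (f y) (g y)) s := by fun_prop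
    have leibniz := HasDerivWithinAt.fun_sum fun p (_ : p ∈ antidiagonal n) ↦
      B.hasDerivWithinAt_of_bilinear (hasDerivWithinAt_taylorCoeffWithin hs hf p.1 hx)
        (hasDerivWithinAt_taylorCoeffWithin hs hg p.2 hx)
    rw [sum_antidiagonal_succ_smul_bilinear B (fun i ↦ taylorCoeffWithin f i s x)
      (fun j ↦ taylorCoeffWithin g j s x)] at leibniz
    have unique := (hs x hx).eq_deriv _
      (hasDerivWithinAt_taylorCoeffWithin hs hB n hx) (leibniz.congr (fun y hy ↦ ih hy) (ih hx))
    exact smul_right_injective G (n.cast_add_one_ne_zero (R := ℝ)) unique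

end TaylorCoefficients

/-- Cauchy's estimates for the Taylor coefficients of `f` within `s`, uniformly on `s` and with a
single constant `K`. On compact intervals they characterise the analytic functions among the smooth
ones. -/
def CauchyEstimates {E : Type*} [NormedAddCommGroup E] [NormedSpace ℝ E] (K : ℝ) (f : ℝ → E)
    (s : Set ℝ) : Prop :=
  ∀ n, ∀ x ∈ s, ‖taylorCoeffWithin f n s x‖ ≤ K ^ (n + 1)

section CauchyEstimates

variable {E : Type*} [NormedAddCommGroup E] [NormedSpace ℝ E] {f : ℝ → E} {s : Set ℝ}

theorem exists_nnnorm_changeOrigin_mul_pow_le {𝕜 V W : Type*} [NontriviallyNormedField 𝕜]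
    [NormedAddCommGroup V] [NormedSpace 𝕜 V] [NormedAddCommGroup W] [NormedSpace 𝕜 W]
    (p : FormalMultilinearSeries 𝕜 V W) {r ε : ℝ≥0} (h : (r + ε : ℝ≥0∞) < p.radius) :
    ∃ C : ℝ≥0, ∀ y : V, ‖y‖₊ ≤ r → ∀ n, ‖p.changeOrigin y n‖₊ * ε ^ n ≤ C := by
  have summable := (NNReal.summable_sigma.1 (p.changeOriginSeries_summable_aux₁ h)).2
  have hr : (r : ℝ≥0∞) < p.radius := le_self_add.trans_lt h
  refine ⟨_, fun y hy n ↦ le_trans ?_ (summable.le_tsum n fun _ _ ↦ zero_le)⟩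
  have summable_inner := p.changeOriginSeries_summable_aux₂ hr n
  have le (i : (l : ℕ) × { t : Finset (Fin (n + l)) // t.card = l }) :
      ‖p (n + i.1)‖₊ * ‖y‖₊ ^ i.1 ≤ ‖p (n + i.1)‖₊ * r ^ i.1 := by gcongr
  calc ‖p.changeOrigin y n‖₊ * ε ^ n
      ≤ (∑' i : (l : ℕ) × { t : Finset (Fin (n + l)) // t.card = l },
          ‖p (n + i.1)‖₊ * r ^ i.1) * ε ^ n := by
        gcongr
        exact (p.nnnorm_changeOrigin_le n ((ENNReal.coe_le_coe.2 hy).trans_lt hr)).trans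
          ((NNReal.summable_of_le le summable_inner).tsum_le_tsum le summable_inner)
    _ = _ := (NNReal.tsum_mul_right _ _).symm

theorem taylorCoeffWithin_eq_of_hasFPowerSeriesOnBall [CompleteSpace E] {x : ℝ}
    {p : FormalMultilinearSeries ℝ ℝ E} {R : ℝ≥0∞} (hp : HasFPowerSeriesOnBall f p x R)
    (hs : UniqueDiffOn ℝ s) (hx : x ∈ s) (n : ℕ) :
    taylorCoeffWithin f n s x = p n fun _ ↦ 1 := by
  rw [taylorCoeffWithin, iteratedDerivWithin_eq_iteratedDeriv hs hp.analyticAt.contDiffAt hx,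
    iteratedDeriv_eq_iteratedFDeriv, ← hp.factorial_smul 1 n, ← Nat.cast_smul_eq_nsmul ℝ,
    inv_smul_smul₀ (by positivity)]

theorem exists_mem_nhdsWithin_eventually_norm_taylorCoeffWithin_le [CompleteSpace E] {z : ℝ}
    (hf : AnalyticAt ℝ f z) (hs : UniqueDiffOn ℝ s) :
    ∃ t ∈ 𝓝[s] z, ∀ᶠ K : ℝ in atTop, ∀ x ∈ t, ∀ n, ‖taylorCoeffWithin f n s x‖ ≤ K ^ (n + 1) := by
  obtain ⟨p, R, hR⟩ := hf
  obtain ⟨r, hr, hrR⟩ := ENNReal.lt_iff_exists_nnreal_btwn.1 (ENNReal.half_pos hR.r_pos.ne')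
  have hr0 : 0 < r := ENNReal.coe_pos.1 hr
  have hrr : (r + r : ℝ≥0∞) < R := (ENNReal.add_lt_add hrR hrR).trans_eq (ENNReal.add_halves R)
  obtain ⟨C, hC⟩ := exists_nnnorm_changeOrigin_mul_pow_le p (hrr.trans_le hR.r_le)
  refine ⟨Metric.ball z r ∩ s, inter_mem (nhdsWithin_le_nhds (Metric.ball_mem_nhds z hr0))
    self_mem_nhdsWithin, ?_⟩
  filter_upwards [eventually_ge_atTop (C : ℝ), eventually_ge_atTop (r⁻¹ : ℝ)] with K hKC hKr
  rintro x ⟨hxr, hxs⟩ n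
  have hK : 0 ≤ K := C.coe_nonneg.trans hKC
  have hy : ‖x - z‖₊ ≤ r := (mem_ball_iff_norm.1 hxr).le
  have hR' := hR.changeOrigin ((ENNReal.coe_le_coe.2 hy).trans_lt (le_self_add.trans_lt hrr))
  rw [add_sub_cancel] at hR'
  rw [taylorCoeffWithin_eq_of_hasFPowerSeriesOnBall hR' hs hxs]
  calc ‖p.changeOrigin (x - z) n fun _ ↦ 1‖
      ≤ ‖p.changeOrigin (x - z) n‖ := by simp
    _ ≤ C * (r⁻¹ : ℝ) ^ n := by
        rw [inv_pow, ← div_eq_mul_inv, le_div_iff₀ (by positivity)]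
        exact_mod_cast hC _ hy n
    _ ≤ K * K ^ n := by gcongr
    _ = K ^ (n + 1) := (pow_succ' K n).symm

theorem eventually_cauchyEstimates [CompleteSpace E] (hf : AnalyticOnNhd ℝ f s)
    (hs : UniqueDiffOn ℝ s) (hsc : IsCompact s) : ∀ᶠ K : ℝ in atTop, CauchyEstimates K f s := by
  suffices ∀ᶠ K : ℝ in atTop, ∀ x ∈ s, ∀ n, ‖taylorCoeffWithin f n s x‖ ≤ K ^ (n + 1) from
    this.mono fun K hK n x hx ↦ hK x hx n
  refine hsc.induction_on (p := fun t ↦ ∀ᶠ K : ℝ in atTop, ∀ x ∈ t, ∀ n,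
    ‖taylorCoeffWithin f n s x‖ ≤ K ^ (n + 1)) (by simp) ?_ ?_ ?_
  · exact fun t u htu hu ↦ hu.mono fun K hK x hx ↦ hK x (htu hx)
  · intro t u ht hu
    filter_upwards [ht, hu] with K hKt hKu x hx using hx.elim (hKt x) (hKu x)
  · exact fun z hz ↦ exists_mem_nhdsWithin_eventually_norm_taylorCoeffWithin_le (hf z hz) hs

theorem exists_analyticAt_hasSum_pow_smul [CompleteSpace E] {c : ℕ → E} {K : ℝ} (hK : 0 < K)
    (hc : ∀ n, ‖c n‖ ≤ K ^ (n + 1)) (x₀ : ℝ) :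
    ∃ g : ℝ → E, (∀ x, |x - x₀| < K⁻¹ → AnalyticAt ℝ g x) ∧
      ∀ x, |x - x₀| < K⁻¹ → HasSum (fun n ↦ (x - x₀) ^ n • c n) (g x) := by
  let p : FormalMultilinearSeries ℝ ℝ E := fun n ↦ ContinuousMultilinearMap.mkPiRing ℝ (Fin n) (c n)
  have radius_ge : ENNReal.ofReal K⁻¹ ≤ p.radius := by
    refine p.le_radius_of_bound K fun n ↦ ?_
    rw [ContinuousMultilinearMap.norm_mkPiRing, Real.coe_toNNReal _ (by positivity)]
    calc ‖c n‖ * K⁻¹ ^ n ≤ K ^ (n + 1) * K⁻¹ ^ n := by gcongr; exact hc n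
      _ = K := by rw [pow_succ', inv_pow, mul_assoc, mul_inv_cancel₀ (by positivity), mul_one]
  have hp := p.hasFPowerSeriesOnBall ((ENNReal.ofReal_pos.2 (inv_pos.2 hK)).trans_le radius_ge)
  have mem_ball (x : ℝ) (hx : |x - x₀| < K⁻¹) : x - x₀ ∈ Metric.eball 0 p.radius := by
    refine Metric.eball_subset_eball radius_ge ?_
    rwa [Metric.eball_ofReal, mem_ball_zero_iff]
  refine ⟨fun x ↦ p.sum (x - x₀), fun x hx ↦ ?_, fun x hx ↦ ?_⟩
  · exact AnalyticAt.fun_comp (hp.analyticAt_of_mem (mem_ball x hx)) (f := fun y ↦ y - x₀)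
      (by fun_prop)
  · simpa [p] using hp.hasSum (mem_ball x hx)

theorem tendsto_taylorWithinEval_Icc {a b K x : ℝ} (hab : a < b)
    (hf : ContDiffOn ℝ ∞ f (Icc a b)) (hK : CauchyEstimates K f (Icc a b)) (hx : x ∈ Icc a b)
    (hKx : K * (x - a) < 1) :
    Tendsto (fun n ↦ taylorWithinEval f n (Icc a b) a x) atTop (𝓝 (f x)) := by
  have ha : a ∈ Icc a b := Set.left_mem_Icc.2 hab.le
  have hK0 : 0 ≤ K := by simpa using (norm_nonneg _).trans (hK 0 a ha)
  have hxa : 0 ≤ x - a := sub_nonneg.2 hx.1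
  have remainder (n : ℕ) : ‖f x - taylorWithinEval f n (Icc a b) a x‖ ≤
      K * ((n + 1 : ℕ) * (K * (x - a)) ^ (n + 1)) := by
    have bound := taylor_mean_remainder_bound (n := n) (C := (n + 1)! * K ^ (n + 2)) hab.le
      (hf.of_le (mod_cast le_top)) hx fun y hy ↦ ?_
    · refine bound.trans_eq ?_
      rw [Nat.factorial_succ, mul_pow]
      push_cast
      field_simp
      ring
    · have := hK (n + 1) y hy
      rwa [taylorCoeffWithin, norm_smul, norm_inv, Real.norm_natCast,
        inv_mul_le_iff₀ (by positivity)] at this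
  have remainder_tendsto : Tendsto (fun n : ℕ ↦ K * ((n + 1 : ℕ) * (K * (x - a)) ^ (n + 1)))
      atTop (𝓝 0) := by
    have := (tendsto_self_mul_const_pow_of_lt_one (by positivity) hKx).const_mul K
    rw [mul_zero] at this
    exact this.comp (tendsto_add_atTop_nat 1)
  exact tendsto_iff_norm_sub_tendsto_zero.2
    (squeeze_zero (fun _ ↦ norm_nonneg _) (fun n ↦ by rw [norm_sub_rev]; exact remainder n)
      remainder_tendsto)

theorem analyticOn_Icc_of_cauchyEstimates [CompleteSpace E] {a b K : ℝ} (hab : a < b) (hK : 0 < K)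
    (hf : ContDiffOn ℝ ∞ f (Icc a b)) (hfK : CauchyEstimates K f (Icc a b)) :
    AnalyticOn ℝ f (Icc a b) := by
  intro x₀ hx₀
  have hKinv : 0 < K⁻¹ := inv_pos.2 hK
  let y := max a (x₀ - K⁻¹ / 2)
  have hyb : y < b := max_lt hab (by linarith [hx₀.2])
  have hsub : Icc y b ⊆ Icc a b := Set.Icc_subset_Icc_left (le_max_left _ _)
  have hfy : CauchyEstimates K f (Icc y b) := fun n x hx ↦ by
    rw [taylorCoeffWithin_subset hsub (uniqueDiffOn_Icc hyb) (uniqueDiffOn_Icc hab) hf n hx]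
    exact hfK n x (hsub hx)
  obtain ⟨g, hg, hgsum⟩ := exists_analyticAt_hasSum_pow_smul hK
    (fun n ↦ hfy n y (Set.left_mem_Icc.2 hyb.le)) y
  have near {x : ℝ} (hx : x ∈ Icc a b) (hxx₀ : x ∈ Metric.ball x₀ (K⁻¹ / 2)) :
      y ≤ x ∧ |x - y| < K⁻¹ := by
    rw [Real.ball_eq_Ioo] at hxx₀
    have hyx : y ≤ x := max_le hx.1 hxx₀.1.le
    rw [abs_of_nonneg (sub_nonneg.2 hyx)]
    exact ⟨hyx, by linarith [hxx₀.2, le_max_right a (x₀ - K⁻¹ / 2)]⟩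
  refine analyticWithinAt_iff_exists_analyticAt.2
    ⟨g, ?_, hg x₀ (near hx₀ (Metric.mem_ball_self (half_pos hKinv))).2⟩
  rw [Set.insert_eq_of_mem hx₀]
  filter_upwards [self_mem_nhdsWithin,
    nhdsWithin_le_nhds (Metric.ball_mem_nhds x₀ (half_pos hKinv))] with x hx hxx₀
  obtain ⟨hyx, hxy⟩ := near hx hxx₀
  refine tendsto_nhds_unique (tendsto_taylorWithinEval_Icc hyb (hf.mono hsub) hfy ⟨hyx, hx.2⟩ ?_) ?_
  · rw [← lt_inv_mul_iff₀ hK, mul_one]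
    exact (le_abs_self _).trans_lt hxy
  · refine ((tendsto_add_atTop_iff_nat 1).2 (hgsum x hxy).tendsto_sum_nat).congr fun n ↦ ?_
    simp only [taylor_within_apply, taylorCoeffWithin, smul_smul, mul_comm]

end CauchyEstimates

/-- The Cauchy product of `m` with the geometric sequence `K ^ n`. It majorises the convolution
of `m` with every sequence bounded by `K ^ n`. -/
def geomConvolution (K : ℝ) (m : ℕ → ℝ) (n : ℕ) : ℝ :=
  ∑ p ∈ antidiagonal n, K ^ p.1 * m p.2

section GeomConvolution

variable {K : ℝ} {m : ℕ → ℝ}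

theorem geomConvolution_succ (n : ℕ) :
    geomConvolution K m (n + 1) = m (n + 1) + K * geomConvolution K m n := by
  simp only [geomConvolution, sum_antidiagonal_succ, Finset.mul_sum, pow_zero, one_mul, pow_succ',
    mul_assoc]

theorem geomConvolution_nonneg (hK : 0 ≤ K) (hm : ∀ n, 0 ≤ m n) (n : ℕ) :
    0 ≤ geomConvolution K m n :=
  Finset.sum_nonneg fun _ _ ↦ mul_nonneg (pow_nonneg hK _) (hm _)

theorem le_geomConvolution (hK : 0 ≤ K) (hm : ∀ n, 0 ≤ m n) (n : ℕ) :
    m n ≤ geomConvolution K m n := by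
  cases n with
  | zero => simp [geomConvolution]
  | succ n =>
    rw [geomConvolution_succ]
    exact le_add_of_nonneg_right (mul_nonneg hK (geomConvolution_nonneg hK hm n))

theorem norm_sum_antidiagonal_le_geomConvolution {E F G : Type*} [SeminormedAddCommGroup E]
    [SeminormedAddCommGroup F] [SeminormedAddCommGroup G] {B : E → F → G}
    (hB : ∀ e f, ‖B e f‖ ≤ ‖e‖ * ‖f‖) {u : ℕ → E} {v : ℕ → F} {C : ℝ}
    (hu : ∀ i, ‖u i‖ ≤ C * K ^ i) (hv : ∀ j, ‖v j‖ ≤ m j) (n : ℕ) :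
    ‖∑ p ∈ antidiagonal n, B (u p.1) (v p.2)‖ ≤ C * geomConvolution K m n := by
  rw [geomConvolution, Finset.mul_sum]
  refine norm_sum_le_of_le _ fun p _ ↦ (hB _ _).trans ?_
  rw [← mul_assoc]
  exact mul_le_mul (hu _) (hv _) (norm_nonneg _) ((norm_nonneg _).trans (hu _))

theorem eventually_le_pow_of_le_geomConvolution {C : ℝ} {N : ℕ} (hK : 0 ≤ K) (hm : ∀ n, 0 ≤ m n)
    (h : ∀ n ≥ N, m (n + 1) ≤ C * geomConvolution K m n) :
    ∀ᶠ D in atTop, ∀ n, m n ≤ D ^ (n + 1) := by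
  filter_upwards [eventually_ge_atTop 1, eventually_ge_atTop (C + K),
    (eventually_all_finset (Finset.range (N + 1))).2 fun n _ ↦
      eventually_ge_atTop (geomConvolution K m n)] with D hD1 hCKD hinit n
  refine (le_geomConvolution hK hm n).trans ?_
  have initial {k : ℕ} (hk : k ≤ N) : geomConvolution K m k ≤ D ^ (k + 1) :=
    (hinit k (Finset.mem_range_succ_iff.2 hk)).trans (le_self_pow₀ hD1 k.succ_ne_zero)
  rcases le_total n N with hnN | hNn
  · exact initial hnN
  induction n, hNn using Nat.le_induction with
  | base => exact initial le_rfl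
  | succ n hn ih =>
    calc geomConvolution K m (n + 1) ≤ (C + K) * geomConvolution K m n := by
          rw [geomConvolution_succ, add_mul]
          gcongr
          exact h n hn
      _ ≤ D * D ^ (n + 1) :=
          mul_le_mul hCKD ih (geomConvolution_nonneg hK hm n) (by positivity)
      _ = D ^ (n + 1 + 1) := (pow_succ' D (n + 1)).symm

end GeomConvolution

section MaximumPrinciple

variable {E : Type*} [NormedAddCommGroup E] [NormedSpace ℝ E]

theorem exists_norming_functional_apply_deriv_eq_zero {u : ℝ → E} {u' : E} {x : ℝ}
    (hmax : IsLocalMax (‖u ·‖) x) (hu : HasDerivAt u u' x) :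
    ∃ ℓ : E →L[ℝ] ℝ, ‖ℓ‖ ≤ 1 ∧ ℓ (u x) = ‖u x‖ ∧ ℓ u' = 0 := by
  obtain ⟨ℓ, hℓ, hℓu⟩ := exists_dual_vector'' ℝ (u x)
  refine ⟨ℓ, hℓ, hℓu, ?_⟩
  have hmaxℓ : IsLocalMax (fun t ↦ ℓ (u t)) x := by
    filter_upwards [hmax] with t ht
    calc ℓ (u t) ≤ ‖ℓ (u t)‖ := Real.le_norm_self _
      _ ≤ ‖u t‖ := ℓ.le_of_opNorm_le_of_le hℓ le_rfl |>.trans_eq (one_mul _)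
      _ ≤ ℓ (u x) := ht.trans_eq hℓu.symm
  exact hmaxℓ.hasDerivAt_eq_zero (ℓ.hasFDerivAt.comp_hasDerivAt x hu)

end MaximumPrinciple

theorem exists_pos_le_abs_or_le_abs_deriv {P P' : ℝ → ℝ} {a b : ℝ}
    (hP : ContinuousOn P (Icc a b)) (hP' : ContinuousOn P' (Icc a b))
    (hsimple : ∀ x ∈ Icc a b, P x = 0 → P' x ≠ 0) :
    ∃ c > 0, ∀ x ∈ Icc a b, c ≤ |P x| ∨ c ≤ |P' x| ∧ (P x = 0 ∨ x ∈ Ioo a b) := by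
  obtain ⟨c, hc, hcP⟩ := isCompact_Icc.exists_forall_le' (a := 0) (hP.abs.sup hP'.abs)
    fun x hx ↦ by
      by_cases hPx : P x = 0
      · exact lt_max_of_lt_right (abs_pos.2 (hsimple x hx hPx))
      · exact lt_max_of_lt_left (abs_pos.2 hPx)
  have endpoint (z : ℝ) : ∃ ε > 0, P z = 0 ∨ ε ≤ |P z| := by
    by_cases hz : P z = 0
    · exact ⟨1, one_pos, .inl hz⟩
    · exact ⟨|P z|, abs_pos.2 hz, .inr le_rfl⟩
  obtain ⟨εa, hεa, ha⟩ := endpoint a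
  obtain ⟨εb, hεb, hb⟩ := endpoint b
  refine ⟨min c (min εa εb), by positivity, fun x hx ↦ ?_⟩
  have interior_or_large : min c (min εa εb) ≤ |P x| ∨ P x = 0 ∨ x ∈ Ioo a b := by
    rcases hx.1.eq_or_lt with rfl | hax
    · exact ha.elim (fun h ↦ .inr (.inl h)) fun h ↦ .inl (by grind)
    rcases hx.2.eq_or_lt with rfl | hxb
    · exact hb.elim (fun h ↦ .inr (.inl h)) fun h ↦ .inl (by grind)
    exact .inr (.inr ⟨hax, hxb⟩)
  exact interior_or_large.elim .inl fun hx' ↦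
    (le_max_iff.1 ((min_le_left _ _).trans (hcP x hx))).imp_right fun h ↦ ⟨h, hx'⟩

section FuchsianRecurrence

variable {E : Type*} [NormedAddCommGroup E] [NormedSpace ℝ E] {p : ℕ → ℝ} {L : ℕ → E →L[ℝ] E}
  {u : ℕ → E} {m : ℕ → ℝ} {K c : ℝ}

theorem norm_le_geomConvolution_of_recurrence (hc : 0 < c) (hp : ∀ i, ‖p i‖ ≤ K ^ (i + 1))
    (hL : ∀ i, ‖L i‖ ≤ K ^ (i + 1)) (hu : ∀ j, ‖u j‖ ≤ m j) {n : ℕ}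
    (hrec : (n + 1 : ℝ) • ∑ q ∈ antidiagonal (n + 1), p q.1 • u q.2 =
      ∑ q ∈ antidiagonal n, L q.1 (u q.2)) (hcp : c ≤ |p 0|) :
    ‖u (n + 1)‖ ≤ (K + K ^ 2) / c * geomConvolution K m n := by
  have leading : p 0 • u (n + 1) = (n + 1 : ℝ)⁻¹ • ∑ q ∈ antidiagonal n, L q.1 (u q.2) -
      ∑ q ∈ antidiagonal n, p (q.1 + 1) • u q.2 := by
    rw [← hrec, inv_smul_smul₀ (by positivity), sum_antidiagonal_succ, add_sub_cancel_right]
  have hsumL : ‖∑ q ∈ antidiagonal n, L q.1 (u q.2)‖ ≤ K * geomConvolution K m n :=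
    norm_sum_antidiagonal_le_geomConvolution (fun T e ↦ T.le_opNorm e)
      (fun i ↦ (hL i).trans_eq (pow_succ' K i)) hu n
  have hsump : ‖∑ q ∈ antidiagonal n, p (q.1 + 1) • u q.2‖ ≤ K ^ 2 * geomConvolution K m n :=
    norm_sum_antidiagonal_le_geomConvolution (u := fun i ↦ p (i + 1))
      (fun t e ↦ (norm_smul t e).le) (fun i ↦ (hp (i + 1)).trans_eq (by ring)) hu n
  rw [div_mul_eq_mul_div, le_div_iff₀' hc, add_mul]
  calc c * ‖u (n + 1)‖ ≤ ‖p 0 • u (n + 1)‖ := by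
        rw [norm_smul]
        exact mul_le_mul_of_nonneg_right hcp (norm_nonneg _)
    _ ≤ ‖(n + 1 : ℝ)⁻¹ • ∑ q ∈ antidiagonal n, L q.1 (u q.2)‖ +
        ‖∑ q ∈ antidiagonal n, p (q.1 + 1) • u q.2‖ := leading ▸ norm_sub_le _ _
    _ ≤ K * geomConvolution K m n + K ^ 2 * geomConvolution K m n := by
        gcongr
        rw [norm_smul]
        refine (mul_le_of_le_one_left (norm_nonneg _) ?_).trans hsumL
        rw [norm_inv, Real.norm_of_nonneg (by positivity)]
        exact inv_le_one_of_one_le₀ (by simp)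

theorem norm_le_geomConvolution_of_singular_recurrence (hp : ∀ i, ‖p i‖ ≤ K ^ (i + 1))
    (hL : ∀ i, ‖L i‖ ≤ K ^ (i + 1)) (hu : ∀ j, ‖u j‖ ≤ m j) (hc : 0 < c) {n : ℕ}
    (hrec : (n + 2 : ℝ) • ∑ q ∈ antidiagonal (n + 2), p q.1 • u q.2 =
      ∑ q ∈ antidiagonal (n + 1), L q.1 (u q.2)) (hcp : c ≤ |p 1|) (hn : 2 * K ≤ (n + 2) * c)
    {ℓ : E →L[ℝ] ℝ} (hℓ : ‖ℓ‖ ≤ 1) (hℓu : ℓ (u (n + 1)) = ‖u (n + 1)‖)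
    (hℓp : p 0 * ℓ (u (n + 2)) = 0) :
    ‖u (n + 1)‖ ≤ 2 * (K ^ 2 + K ^ 3) / c * geomConvolution K m n := by
  set sumL := ∑ q ∈ antidiagonal n, L (q.1 + 1) (u q.2)
  set sump := ∑ q ∈ antidiagonal n, p (q.1 + 2) • u q.2
  have hsumL : ‖sumL‖ ≤ K ^ 2 * geomConvolution K m n :=
    norm_sum_antidiagonal_le_geomConvolution (u := fun i ↦ L (i + 1))
      (fun T e ↦ T.le_opNorm e) (fun i ↦ (hL (i + 1)).trans_eq (by ring)) hu n
  have hsump : ‖sump‖ ≤ K ^ 3 * geomConvolution K m n :=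
    norm_sum_antidiagonal_le_geomConvolution (u := fun i ↦ p (i + 2))
      (fun t e ↦ (norm_smul t e).le) (fun i ↦ (hp (i + 2)).trans_eq (by ring)) hu n
  have hℓ_le (e : E) : |ℓ e| ≤ ‖e‖ := (ℓ.le_of_opNorm_le hℓ e).trans_eq (one_mul _)
  have tested : (n + 2 : ℝ) * (p 1 * ‖u (n + 1)‖) =
      ℓ (L 0 (u (n + 1))) + ℓ sumL - (n + 2) * ℓ sump := by
    have := congrArg ℓ hrec
    simp only [sum_antidiagonal_succ, map_smul, map_add, smul_eq_mul, hℓu, hℓp, zero_add] at this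
    linear_combination this
  have absorbed : (n + 2) * (c * ‖u (n + 1)‖) ≤
      K * ‖u (n + 1)‖ + (n + 2) * ((K ^ 2 + K ^ 3) * geomConvolution K m n) := by
    calc (n + 2) * (c * ‖u (n + 1)‖) ≤ (n + 2) * (|p 1| * ‖u (n + 1)‖) := by gcongr
      _ = |ℓ (L 0 (u (n + 1))) + ℓ sumL - (n + 2) * ℓ sump| := by
        rw [← tested, abs_mul, abs_mul, abs_norm, abs_of_nonneg (by positivity : (0 : ℝ) ≤ n + 2)]
      _ ≤ |ℓ (L 0 (u (n + 1)))| + |ℓ sumL| + (n + 2) * |ℓ sump| := by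
        refine (abs_sub _ _).trans (add_le_add (abs_add_le _ _) ?_)
        rw [abs_mul, abs_of_nonneg (by positivity : (0 : ℝ) ≤ n + 2)]
      _ ≤ K * ‖u (n + 1)‖ + K ^ 2 * geomConvolution K m n +
          (n + 2) * (K ^ 3 * geomConvolution K m n) := by
        gcongr
        · exact (hℓ_le _).trans ((L 0).le_of_opNorm_le ((hL 0).trans_eq (pow_one K)) _)
        · exact (hℓ_le _).trans hsumL
        · exact (hℓ_le _).trans hsump
      _ ≤ _ := by nlinarith [(norm_nonneg _).trans hsumL, n.cast_nonneg (α := ℝ)]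
  have half : (n + 2) * (c * ‖u (n + 1)‖) ≤
      (n + 2) * (2 * (K ^ 2 + K ^ 3) * geomConvolution K m n) := by
    nlinarith [mul_le_mul_of_nonneg_right hn (norm_nonneg (u (n + 1)))]
  rw [div_mul_eq_mul_div, le_div_iff₀' hc]
  exact le_of_mul_le_mul_left half (by positivity)

end FuchsianRecurrence

section FuchsianSystem

variable {E : Type*} [NormedAddCommGroup E] [NormedSpace ℝ E] {P : ℝ → ℝ} {L : ℝ → E →L[ℝ] E}
  {y : ℝ → E} {a b : ℝ}

theorem smul_sum_antidiagonal_taylorCoeffWithin_eq {s : Set ℝ} {x : ℝ} (hs : UniqueDiffOn ℝ s)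
    (hP : ContDiffOn ℝ ∞ P s) (hL : ContDiffOn ℝ ∞ L s) (hy : ContDiffOn ℝ ∞ y s)
    (hode : EqOn (derivWithin (fun x ↦ P x • y x) s) (fun x ↦ L x (y x)) s) (n : ℕ) (hx : x ∈ s) :
    (n + 1 : ℝ) • ∑ q ∈ antidiagonal (n + 1),
        taylorCoeffWithin P q.1 s x • taylorCoeffWithin y q.2 s x =
      ∑ q ∈ antidiagonal n, taylorCoeffWithin L q.1 s x (taylorCoeffWithin y q.2 s x) := by
  have coeff_smul := taylorCoeffWithin_bilinear (.lsmul ℝ ℝ) hs hP hy (n + 1) hx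
  have coeff_apply := taylorCoeffWithin_bilinear (.id ℝ (E →L[ℝ] E)) hs hL hy n hx
  simp only [ContinuousLinearMap.lsmul_apply] at coeff_smul
  rw [← coeff_smul, ← taylorCoeffWithin_derivWithin, taylorCoeffWithin_congr hode n hx]
  exact coeff_apply

theorem exists_norming_functional_taylorCoeffWithin (hab : a < b)
    (hy : ContDiffOn ℝ ∞ y (Icc a b)) {n : ℕ} {x : ℝ}
    (hmax : IsMaxOn (‖taylorCoeffWithin y n (Icc a b) ·‖) (Icc a b) x)
    (hx : P x = 0 ∨ x ∈ Ioo a b) :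
    ∃ ℓ : E →L[ℝ] ℝ, ‖ℓ‖ ≤ 1 ∧
      ℓ (taylorCoeffWithin y n (Icc a b) x) = ‖taylorCoeffWithin y n (Icc a b) x‖ ∧
      P x * ℓ (taylorCoeffWithin y (n + 1) (Icc a b) x) = 0 := by
  rcases hx with hPx | hx
  · obtain ⟨ℓ, hℓ, hℓu⟩ := exists_dual_vector'' ℝ (taylorCoeffWithin y n (Icc a b) x)
    exact ⟨ℓ, hℓ, hℓu, by rw [hPx, zero_mul]⟩
  · have hnhds : Icc a b ∈ 𝓝 x := Icc_mem_nhds hx.1 hx.2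
    obtain ⟨ℓ, hℓ, hℓu, hℓu'⟩ := exists_norming_functional_apply_deriv_eq_zero
      (hmax.isLocalMax hnhds) ((hasDerivWithinAt_taylorCoeffWithin (uniqueDiffOn_Icc hab) hy n
        (Set.Ioo_subset_Icc_self hx)).hasDerivAt hnhds)
    rw [map_smul, smul_eq_zero_iff_right n.cast_add_one_ne_zero] at hℓu'
    exact ⟨ℓ, hℓ, hℓu, by rw [hℓu', mul_zero]⟩

theorem norm_taylorCoeffWithin_succ_le_geomConvolution {m : ℕ → ℝ} {K c x : ℝ} {n : ℕ} (hab : a < b)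
    (hK : 1 ≤ K) (hc : 0 < c) (hP : ContDiffOn ℝ ∞ P (Icc a b)) (hL : ContDiffOn ℝ ∞ L (Icc a b))
    (hPK : CauchyEstimates K P (Icc a b)) (hLK : CauchyEstimates K L (Icc a b))
    (hy : ContDiffOn ℝ ∞ y (Icc a b))
    (hode : EqOn (derivWithin (fun x ↦ P x • y x) (Icc a b)) (fun x ↦ L x (y x)) (Icc a b))
    (hx : x ∈ Icc a b) (hym : ∀ j, ‖taylorCoeffWithin y j (Icc a b) x‖ ≤ m j)
    (hmax : IsMaxOn (‖taylorCoeffWithin y (n + 1) (Icc a b) ·‖) (Icc a b) x)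
    (hsep : c ≤ |P x| ∨ c ≤ |derivWithin P (Icc a b) x| ∧ (P x = 0 ∨ x ∈ Ioo a b))
    (hn : 2 * K ≤ (n + 2) * c) :
    ‖taylorCoeffWithin y (n + 1) (Icc a b) x‖ ≤
      2 * (K ^ 2 + K ^ 3) / c * geomConvolution K m n := by
  have hrec (k : ℕ) :=
    smul_sum_antidiagonal_taylorCoeffWithin_eq (uniqueDiffOn_Icc hab) hP hL hy hode k hx
  rcases hsep with hPx | ⟨hP'x, hx'⟩
  · refine (norm_le_geomConvolution_of_recurrence hc (hPK · _ hx) (hLK · _ hx) hym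
      (hrec n) (by simpa [taylorCoeffWithin] using hPx)).trans ?_
    gcongr
    · exact geomConvolution_nonneg (zero_le_one.trans hK) (fun j ↦ (norm_nonneg _).trans (hym j)) n
    · nlinarith
  · obtain ⟨ℓ, hℓ, hℓu, hℓP⟩ := exists_norming_functional_taylorCoeffWithin hab hy hmax hx'
    refine norm_le_geomConvolution_of_singular_recurrence (hPK · _ hx) (hLK · _ hx) hym hc ?_ ?_ hn
      hℓ hℓu (by simpa [taylorCoeffWithin] using hℓP)
    · convert hrec (n + 1) using 2
      push_cast
      ring
    · simpa [taylorCoeffWithin] using hP'x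

theorem eventually_cauchyEstimates_of_derivWithin_smul_eq {K : ℝ} (hab : a < b) (hK : 1 ≤ K)
    (hP : ContDiffOn ℝ ∞ P (Icc a b)) (hL : ContDiffOn ℝ ∞ L (Icc a b))
    (hPK : CauchyEstimates K P (Icc a b)) (hLK : CauchyEstimates K L (Icc a b))
    (hsimple : ∀ x ∈ Icc a b, P x = 0 → derivWithin P (Icc a b) x ≠ 0)
    (hy : ContDiffOn ℝ ∞ y (Icc a b))
    (hode : EqOn (derivWithin (fun x ↦ P x • y x) (Icc a b)) (fun x ↦ L x (y x)) (Icc a b)) :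
    ∀ᶠ D in atTop, CauchyEstimates D y (Icc a b) := by
  have hs : UniqueDiffOn ℝ (Icc a b) := uniqueDiffOn_Icc hab
  obtain ⟨c, hc, hsep⟩ := exists_pos_le_abs_or_le_abs_deriv hP.continuousOn
    (hP.continuousOn_derivWithin hs (mod_cast le_top)) hsimple
  choose z hz hmax using fun n ↦ isCompact_Icc.exists_isMaxOn (Set.nonempty_Icc.2 hab.le)
    (continuousOn_taylorCoeffWithin hs hy n).norm
  let m (n : ℕ) : ℝ := ‖taylorCoeffWithin y n (Icc a b) (z n)‖
  obtain ⟨N, hN⟩ := exists_nat_ge (2 * K / c)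
  have step (n : ℕ) (hn : n ≥ N) :
      m (n + 1) ≤ 2 * (K ^ 2 + K ^ 3) / c * geomConvolution K m n := by
    refine norm_taylorCoeffWithin_succ_le_geomConvolution hab hK hc hP hL hPK hLK hy hode
      (hz (n + 1)) (fun j ↦ hmax j (hz (n + 1))) (hmax (n + 1)) (hsep _ (hz (n + 1))) ?_
    rw [← div_le_iff₀ hc]
    exact hN.trans (mod_cast hn.le.trans (Nat.le_add_right n 2))
  filter_upwards [eventually_le_pow_of_le_geomConvolution (m := m) (zero_le_one.trans hK)
    (fun _ ↦ norm_nonneg _) step] with D hD n x hx using (hmax n hx).trans (hD n)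

theorem analyticOn_Icc_of_smul_derivWithin_eq [CompleteSpace E] {M : ℝ → E →L[ℝ] E} (hab : a < b)
    (hP : AnalyticOnNhd ℝ P (Icc a b)) (hM : AnalyticOnNhd ℝ M (Icc a b))
    (hsimple : ∀ x ∈ Icc a b, P x = 0 → deriv P x ≠ 0) (hy : ContDiffOn ℝ ∞ y (Icc a b))
    (hode : ∀ x ∈ Icc a b, P x • derivWithin y (Icc a b) x = M x (y x)) :
    AnalyticOn ℝ y (Icc a b) := by
  have hs : UniqueDiffOn ℝ (Icc a b) := uniqueDiffOn_Icc hab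
  have hP' (x) (hx : x ∈ Icc a b) : derivWithin P (Icc a b) x = deriv P x :=
    (hP x hx).differentiableAt.derivWithin (hs x hx)
  let L (x : ℝ) : E →L[ℝ] E := deriv P x • .id ℝ E + M x
  have hL : AnalyticOnNhd ℝ L (Icc a b) := (hP.deriv.smul analyticOnNhd_const).add hM
  have divergence_form :
      EqOn (derivWithin (fun x ↦ P x • y x) (Icc a b)) (fun x ↦ L x (y x)) (Icc a b) := by
    intro x hx
    rw [derivWithin_fun_smul (hP x hx).differentiableAt.differentiableWithinAt
      (hy.differentiableOn (by simp) x hx), hode x hx, hP' x hx, add_comm]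
    rfl
  obtain ⟨K, hPK, hLK, hK⟩ := ((eventually_cauchyEstimates hP hs isCompact_Icc).and
    ((eventually_cauchyEstimates hL hs isCompact_Icc).and (eventually_ge_atTop 1))).exists
  obtain ⟨D, hyD, hD⟩ := ((eventually_cauchyEstimates_of_derivWithin_smul_eq hab hK
    (hP.contDiffOn hs) (hL.contDiffOn hs) hPK hLK
    (fun x hx ↦ hP' x hx ▸ hsimple x hx) hy divergence_form).and (eventually_gt_atTop 0)).exists
  exact analyticOn_Icc_of_cauchyEstimates hab hD hy hyD

end FuchsianSystem

section SecondOrder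

variable {E : Type*} [NormedAddCommGroup E] [NormedSpace ℝ E] {P : ℝ → ℝ} {Q R : ℝ → E →L[ℝ] E}
  {f : ℝ → E} {a b : ℝ}

theorem smul_iteratedDerivWithin_two_add_eq_zero_of_Ioo (hab : a < b)
    (hP : ContinuousOn P (Icc a b)) (hQ : ContinuousOn Q (Icc a b)) (hR : ContinuousOn R (Icc a b))
    (hf : ContDiffOn ℝ 2 f (Icc a b))
    (hode : ∀ x ∈ Ioo a b, P x • iteratedDeriv 2 f x + Q x (deriv f x) + R x (f x) = 0) :
    ∀ x ∈ Icc a b, P x • iteratedDerivWithin 2 f (Icc a b) x + Q x (derivWithin f (Icc a b) x) +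
      R x (f x) = 0 := by
  have hs : UniqueDiffOn ℝ (Icc a b) := uniqueDiffOn_Icc hab
  have hf' : ContinuousOn (derivWithin f (Icc a b)) (Icc a b) :=
    hf.continuousOn_derivWithin hs one_le_two
  have hf'' : ContinuousOn (iteratedDerivWithin 2 f (Icc a b)) (Icc a b) :=
    hf.continuousOn_iteratedDerivWithin le_rfl hs
  refine EqOn.of_subset_closure (s := Ioo a b) (g := fun _ ↦ 0) (fun x hx ↦ ?_)
    (((hP.smul hf'').add (hQ.clm_apply hf')).add (hR.clm_apply hf.continuousOn))
    continuousOn_const Set.Ioo_subset_Icc_self (closure_Ioo hab.ne).ge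
  have hnhds : Icc a b ∈ 𝓝 x := Icc_mem_nhds hx.1 hx.2
  have := hode x hx
  rwa [← derivWithin_of_mem_nhds hnhds, ← iteratedDerivWithin_eq_iteratedDeriv hs
    (hf.contDiffAt hnhds) (Set.Ioo_subset_Icc_self hx)] at this

theorem analyticOn_Icc_of_second_order [CompleteSpace E] (hab : a < b)
    (hP : AnalyticOnNhd ℝ P (Icc a b)) (hQ : AnalyticOnNhd ℝ Q (Icc a b))
    (hR : AnalyticOnNhd ℝ R (Icc a b)) (hsimple : ∀ x ∈ Icc a b, P x = 0 → deriv P x ≠ 0)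
    (hf : ContDiffOn ℝ ∞ f (Icc a b))
    (hode : ∀ x ∈ Ioo a b, P x • iteratedDeriv 2 f x + Q x (deriv f x) + R x (f x) = 0) :
    AnalyticOn ℝ f (Icc a b) := by
  have hs : UniqueDiffOn ℝ (Icc a b) := uniqueDiffOn_Icc hab
  have hf' : ContDiffOn ℝ ∞ (derivWithin f (Icc a b)) (Icc a b) := hf.derivWithin hs (by simp)
  let second (π : E × E →L[ℝ] E) : (E →L[ℝ] E) →L[ℝ] (E × E →L[ℝ] E × E) :=
    .compL ℝ (E × E) E (E × E) (.inr ℝ E E) ∘L (.flip (.compL ℝ (E × E) E E) π)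
  let M (x : ℝ) : E × E →L[ℝ] E × E :=
    P x • (.inl ℝ E E ∘L .snd ℝ E E) - second (.fst ℝ E E) (R x) - second (.snd ℝ E E) (Q x)
  have hM : AnalyticOnNhd ℝ M (Icc a b) :=
    ((hP.smul analyticOnNhd_const).sub ((second _).comp_analyticOnNhd hR)).sub
      ((second _).comp_analyticOnNhd hQ)
  have first_order : ∀ x ∈ Icc a b,
      P x • derivWithin (fun x ↦ (f x, derivWithin f (Icc a b) x)) (Icc a b) x =
        M x (f x, derivWithin f (Icc a b) x) := by
    intro x hx
    have hode' := smul_iteratedDerivWithin_two_add_eq_zero_of_Ioo hab hP.continuousOn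
      hQ.continuousOn hR.continuousOn (mod_cast contDiffOn_infty.1 hf 2) hode x hx
    rw [((hf.differentiableOn (by simp) x hx).hasDerivWithinAt.prodMk
      (hf'.differentiableOn (by simp) x hx).hasDerivWithinAt).derivWithin (hs x hx)]
    rw [iteratedDerivWithin_succ, iteratedDerivWithin_one] at hode'
    ext
    · simp [M, second]
    · simpa [M, second, sub_eq_add_neg, add_assoc, add_eq_zero_iff_eq_neg] using hode'
  exact (ContinuousLinearMap.fst ℝ E E).comp_analyticOn
    (analyticOn_Icc_of_smul_derivWithin_eq hab hP hM hsimple (hf.prodMk hf') first_order)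

end SecondOrder

theorem exists_isOpen_analyticOnNhd_eqOn_Icc {E : Type*} [NormedAddCommGroup E] [NormedSpace ℝ E]
    [CompleteSpace E] {f : ℝ → E} {a b : ℝ} (hab : a < b) (hf : AnalyticOn ℝ f (Icc a b)) :
    ∃ (g : ℝ → E) (U : Set ℝ), IsOpen U ∧ Icc a b ⊆ U ∧ AnalyticOnNhd ℝ g U ∧
      EqOn g f (Icc a b) := by
  have ha : a ∈ Icc a b := Set.left_mem_Icc.2 hab.le
  have hb : b ∈ Icc a b := Set.right_mem_Icc.2 hab.le
  obtain ⟨l, hfl, hl⟩ := analyticWithinAt_iff_exists_analyticAt.1 (hf a ha)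
  obtain ⟨r, hfr, hr⟩ := analyticWithinAt_iff_exists_analyticAt.1 (hf b hb)
  rw [Set.insert_eq_of_mem ‹_›, EventuallyEq, eventually_nhdsWithin_iff] at hfl hfr
  let g (x : ℝ) : E := if x < a then l x else if x ≤ b then f x else r x
  have hgf : EqOn g f (Icc a b) := fun x hx ↦ by simp [g, hx.1.not_gt, hx.2]
  refine ⟨g, {x | AnalyticAt ℝ g x}, isOpen_analyticAt ℝ g, fun x hx ↦ ?_, fun x hx ↦ hx, hgf⟩
  rcases hx.1.eq_or_lt with rfl | hax
  · refine hl.congr ?_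
    filter_upwards [hfl, gt_mem_nhds hab] with y hy hyb
    simp only [g]
    grind
  rcases hx.2.eq_or_lt with rfl | hxb
  · refine hr.congr ?_
    filter_upwards [hfr, lt_mem_nhds hab] with y hy hay
    simp only [g]
    grind
  · have hnhds : Icc a b ∈ 𝓝 x := Icc_mem_nhds hax hxb
    obtain ⟨h, hfh, hh⟩ := analyticWithinAt_iff_exists_analyticAt.1 (hf x hx)
    rw [Set.insert_eq_of_mem hx, nhdsWithin_eq_nhds.2 hnhds] at hfh
    exact hh.congr (hfh.symm.trans (hgf.eventuallyEq_of_mem hnhds).symm)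

theorem deriv_mul_one_sub_sq_ne_zero {x : ℝ} (hx : x * (1 - x ^ 2) = 0) :
    deriv (fun x : ℝ ↦ x * (1 - x ^ 2)) x ≠ 0 := by
  have hderiv : HasDerivAt (fun x : ℝ ↦ x * (1 - x ^ 2)) (1 - 3 * x ^ 2) x := by
    refine ((hasDerivAt_id' x).mul ((hasDerivAt_pow 2 x).const_sub 1)).congr_deriv ?_
    push_cast
    ring
  rw [hderiv.deriv]
  rcases mul_eq_zero.1 hx with h | h
  · norm_num [h]
  · linarith

theorem mode_ODE_solutions_analytic_general (d lam : ℂ) (f : ℝ → ℂ)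
    (hpole : ∀ ρ ∈ Icc (0 : ℝ) 1, d - 4 + 3 * (ρ : ℂ) ^ 2 ≠ 0)
    (hsmooth : ContDiffOn ℝ ∞ f (Icc 0 1))
    (hode : ∀ ρ ∈ Ioo (0 : ℝ) 1,
      (1 - (ρ : ℂ) ^ 2) * iteratedDeriv 2 f ρ
        + ((d - 1) / (ρ : ℂ) - 2 * (lam + 2) * (ρ : ℂ)) * deriv f ρ
        - ((lam + 1) * (lam + 2)
            - 24 * (d - 1) * (d - 4) / (d - 4 + 3 * (ρ : ℂ) ^ 2) ^ 2) * f ρ = 0) :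
    ∃ (g : ℝ → ℂ) (U : Set ℝ), IsOpen U ∧ Icc (0 : ℝ) 1 ⊆ U ∧ AnalyticOnNhd ℝ g U ∧
      ∀ ρ ∈ Icc (0 : ℝ) 1, g ρ = f ρ := by
  let P (ρ : ℝ) : ℝ := ρ * (1 - ρ ^ 2)
  let Q (ρ : ℝ) : ℂ := d - 1 - 2 * (lam + 2) * ρ ^ 2
  let R (ρ : ℝ) : ℂ :=
    -ρ * ((lam + 1) * (lam + 2) - 24 * (d - 1) * (d - 4) / (d - 4 + 3 * ρ ^ 2) ^ 2)
  have hP : AnalyticOnNhd ℝ P (Icc 0 1) := fun ρ _ ↦ by fun_prop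
  have hofReal (ρ : ℝ) : AnalyticAt ℝ (fun ρ : ℝ ↦ (ρ : ℂ)) ρ := Complex.ofRealCLM.analyticAt ρ
  have hQ : AnalyticOnNhd ℝ Q (Icc 0 1) := fun ρ _ ↦ by fun_prop
  have hR : AnalyticOnNhd ℝ R (Icc 0 1) := fun ρ hρ ↦ by
    have := pow_ne_zero 2 (hpole ρ hρ)
    fun_prop (disch := assumption)
  have hmul (ρ : ℝ) (hρ : ρ ∈ Ioo (0 : ℝ) 1) :
      P ρ • iteratedDeriv 2 f ρ + ContinuousLinearMap.mul ℝ ℂ (Q ρ) (deriv f ρ) +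
        ContinuousLinearMap.mul ℝ ℂ (R ρ) (f ρ) = 0 := by
    have hρ0 : (ρ : ℂ) ≠ 0 := Complex.ofReal_ne_zero.2 hρ.1.ne'
    simp only [ContinuousLinearMap.mul_apply', Complex.real_smul, P, Q, R, Complex.ofReal_mul,
      Complex.ofReal_sub, Complex.ofReal_one, Complex.ofReal_pow]
    linear_combination (ρ : ℂ) * hode ρ hρ - deriv f ρ * mul_div_cancel₀ (d - 1) hρ0
  exact exists_isOpen_analyticOnNhd_eqOn_Icc one_pos <| analyticOn_Icc_of_second_order one_pos hP
    ((ContinuousLinearMap.mul ℝ ℂ).comp_analyticOnNhd hQ)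
    ((ContinuousLinearMap.mul ℝ ℂ).comp_analyticOnNhd hR) (fun _ _ ↦ deriv_mul_one_sub_sq_ne_zero)
    hsmooth hmul

/-- For `d ≥ 5` and `λ ∈ ℂ`, every complex-valued function smooth on `[0,1]` and
solving the mode ODE on `(0,1)` is analytic on `[0,1]`, i.e. it extends to a function
analytic on an open neighborhood of `[0,1]` in `ℝ`. -/
theorem mode_ODE_solutions_analytic (d : ℕ) (hd : 5 ≤ d) (lam : ℂ) (f : ℝ → ℂ)
    (hsmooth : ContDiffOn ℝ (⊤ : ℕ∞) f (Set.Icc 0 1))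
    (hode : ∀ ρ ∈ Set.Ioo (0 : ℝ) 1,
      (1 - (ρ : ℂ) ^ 2) * iteratedDeriv 2 f ρ
        + (((d : ℂ) - 1) / (ρ : ℂ) - 2 * (lam + 2) * (ρ : ℂ)) * deriv f ρ
        - ((lam + 1) * (lam + 2)
            - 24 * ((d : ℂ) - 1) * ((d : ℂ) - 4) /
                ((d : ℂ) - 4 + 3 * (ρ : ℂ) ^ 2) ^ 2) * f ρ = 0) :
    ∃ (g : ℝ → ℂ) (U : Set ℝ), IsOpen U ∧ Set.Icc (0 : ℝ) 1 ⊆ U ∧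
      AnalyticOnNhd ℝ g U ∧ ∀ ρ ∈ Set.Icc (0 : ℝ) 1, g ρ = f ρ := by
  refine mode_ODE_solutions_analytic_general d lam f (fun ρ _ ↦ ?_) hsmooth hode
  have hd' : (5 : ℝ) ≤ d := mod_cast hd
  have hpos : 0 < (d : ℝ) - 4 + 3 * ρ ^ 2 := by nlinarith
  exact_mod_cast hpos.ne'
end
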